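/- Fix 2 < r < 6. For any t ∈ ℝ, any interval I ⊆ [0, t], and any spacetime function F : I × ℝ³ → ℂ, one has ‖ ∫_I e^{i(t−s)Δ} F(s) ds ‖_{L^r_x(ℝ³)} ≤ C min{ ‖ |t−s|^{−3(1/2−1/r)} F(s) ‖_{L^1_s L^{r/(r−1)}_x(I×ℝ³)} , ‖ |t−s|^{−3(1/2−1/r)} F(s) ‖_{L^{r/(r−1)}_s L^{3r/(3r−1)}_x(I×ℝ³)} }, with C depending only on r. -/

import Mathlib

open MeasureTheory Set
open scoped ENNReal Real

noncomputable section

/-- The free Schrödinger propagator `e^{itΔ}` acting on functions on a `d`-dimensional space: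
for `t ≠ 0`, `(e^{itΔ}f)(x) = (4πit)^{-d/2} ∫ e^{i|x-y|²/(4t)} f(y) dy`, and `e^{i0Δ}f = f`. -/
def schrod {E : Type*} [NormedAddCommGroup E] [MeasureSpace E] (d : ℕ) (t : ℝ) (f : E → ℂ) :
    E → ℂ :=
  if t = 0 then f
  else fun x =>
    (4 * (Real.pi : ℂ) * Complex.I * (t : ℂ)) ^ (-(d : ℂ) / 2) *
      ∫ y, Complex.exp (Complex.I * ((‖x - y‖ ^ 2 : ℝ) : ℂ) / (4 * (t : ℂ))) * f y

/-- Mixed Lebesgue norm `‖u‖_{L^p_t L^q_x (I × space)}`. -/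
def mixedNorm {α : Type*} [MeasurableSpace α] (ν : Measure α) (I : Set ℝ) (p q : ℝ≥0∞)
    (u : ℝ → α → ℂ) : ℝ≥0∞ :=
  if p = ∞ then essSup (fun t => eLpNorm (u t) q ν) (volume.restrict I)
  else (∫⁻ t in I, eLpNorm (u t) q ν ^ p.toReal) ^ (1 / p.toReal)

/-- Lorentz quasinorm `p^{1/q} ‖ λ · ν({g > λ})^{1/p} ‖_{L^q((0,∞), dλ/λ)}`
for an `ℝ≥0∞`-valued function `g`. -/
def lorentzNorm {α : Type*} [MeasurableSpace α] (ν : Measure α) (p q : ℝ≥0∞)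
    (g : α → ℝ≥0∞) : ℝ≥0∞ :=
  if q = ∞ then
    ⨆ l ∈ Set.Ioi (0 : ℝ), ENNReal.ofReal l * ν {x | ENNReal.ofReal l < g x} ^ p⁻¹.toReal
  else
    (p * ∫⁻ l in Set.Ioi (0 : ℝ),
        (ENNReal.ofReal l * ν {x | ENNReal.ofReal l < g x} ^ p⁻¹.toReal) ^ q.toReal /
          ENNReal.ofReal l) ^ q⁻¹.toReal

/-- Lorentz quasinorm `‖f‖_{L^{p,q}}` of a scalar function. -/
def lorentzNormC {α : Type*} [MeasurableSpace α] (ν : Measure α) (p q : ℝ≥0∞)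
    (f : α → ℂ) : ℝ≥0∞ :=
  lorentzNorm ν p q fun x => (‖f x‖₊ : ℝ≥0∞)

/-- Lorentz-in-time mixed norm `‖u‖_{L^{p,q}_t L^r_x (I × space)}`. -/
def lorentzMixedNorm {α : Type*} [MeasurableSpace α] (ν : Measure α) (I : Set ℝ)
    (p q r : ℝ≥0∞) (u : ℝ → α → ℂ) : ℝ≥0∞ :=
  lorentzNorm (volume.restrict I) p q fun t => eLpNorm (u t) r ν

/-- The nonlinearity `|f|^a f`. -/
def nonlin {E : Type*} (a : ℝ) (f : E → ℂ) : E → ℂ := fun x => ((‖f x‖ ^ a : ℝ) : ℂ) * f x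

/-! By duality and Hölder's inequality in `s`, with `d` the dimension, it suffices to bound
`|τ|^{d(1/2-1/r)} e^{iτΔ}φ` in `L^r_x` for each `τ`, and in `L^r_τ L^q_x` with `q = rd/(d-2)`, by
the `L^{r/(r-1)}` norm of `φ`. Expanding `|x-y|²` shows that `e^{iτΔ}φ` is, up to a dilation and
unimodular factors, the Fourier transform `φ_σ` of `e^{iσ|y|²} φ(y)` at `σ = (4τ)⁻¹`; this removes
the weights, and leaves bounds for `φ_σ` in `L^r` and in `L^r_σ L^q`.

Both are interpolated with `‖φ_σ‖_∞ ≤ ‖φ‖₁`. The first starts from Plancherel, the second from the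
weak endpoint Strichartz estimate `l² ∫ |{|φ_σ| > l}|^{(d-2)/d} dσ ≤ C ‖φ‖₂²`. For the latter, pair
`φ_σ` with its phase on the level set `{|φ_σ| > l}`, divided by `z = |{|φ_σ| > l}|^{2/d}`, and apply
`TT*`. The better of the dispersive and energy bounds on the resulting pairings is a kernel in
`σ - σ'` whose integral is of the order of `|{|φ_σ| > l}|^{(d-2)/d}`: the level sets have a fixed
height, so no endpoint summation is needed. -/

open Filter Module
open scoped FourierTransform ComplexInnerProductSpace ComplexConjugate NNReal Topology

lemma lintegral_enorm_mul_enorm_le {X : Type*} [MeasurableSpace X] {μ : Measure X} {f g : X → ℂ}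
    (hf : AEStronglyMeasurable f μ) (hg : AEStronglyMeasurable g μ) :
    ∫⁻ x, ‖f x‖ₑ * ‖g x‖ₑ ∂μ ≤ eLpNorm f 2 μ * eLpNorm g 2 μ := by
  simpa [eLpNorm_eq_lintegral_rpow_enorm_toReal] using
    ENNReal.lintegral_mul_le_Lp_mul_Lq μ Real.HolderConjugate.two_two hf.enorm hg.enorm

section Fourier

variable {V : Type*} [NormedAddCommGroup V] [InnerProductSpace ℝ V] [FiniteDimensional ℝ V]
  [MeasurableSpace V] [BorelSpace V] {f g : V → ℂ}

lemma enorm_fourier_le (f : V → ℂ) (ξ : V) : ‖𝓕 f ξ‖ₑ ≤ ∫⁻ y, ‖f y‖ₑ := by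
  rw [Real.fourier_eq]
  refine (enorm_integral_le_lintegral_enorm _).trans_eq (lintegral_congr fun y => ?_)
  rw [← ofReal_norm, Circle.norm_smul, ofReal_norm]

lemma continuous_fourier (hf : Integrable f) : Continuous (𝓕 f) :=
  VectorFourier.fourierIntegral_continuous Real.continuous_fourierChar continuous_inner hf

lemma integral_fourier_mul_comm (hf : Integrable f) (hg : Integrable g) :
    ∫ x, 𝓕 f x * g x = ∫ x, f x * 𝓕 g x := by
  have h := VectorFourier.integral_fourierIntegral_smul_eq_flip (L := innerₗ V)
    Real.continuous_fourierChar continuous_inner hf hg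
  rwa [flip_innerₗ] at h

lemma fourier_toLp_ae_eq (h₁ : Integrable f) (h₂ : MemLp f 2) :
    ((𝓕 (h₂.toLp f) : Lp ℂ 2 (volume : Measure V)) : V → ℂ) =ᵐ[volume] 𝓕 f := by
  refine ae_eq_of_integral_contDiff_smul_eq ((Lp.memLp _).locallyIntegrable one_le_two)
    (continuous_fourier h₁).locallyIntegrable fun φ hφ hφc => ?_
  set ψ : SchwartzMap V ℂ := (hφc.comp_left (g := ((↑) : ℝ → ℂ)) rfl).toSchwartzMap
    (Complex.ofRealCLM.contDiff.comp hφ)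
  have hψ (x : V) (z : ℂ) : φ x • z = ψ x * z := Complex.real_smul
  have hdual := DFunLike.congr_fun (Lp.fourier_toTemperedDistribution_eq (h₂.toLp f)) ψ
  rw [TemperedDistribution.fourier_apply, Lp.toTemperedDistribution_apply,
    Lp.toTemperedDistribution_apply] at hdual
  simp only [hψ]
  calc ∫ x, ψ x * (𝓕 (h₂.toLp f) : Lp ℂ 2 (volume : Measure V)) x
      = ∫ x, 𝓕 (ψ : V → ℂ) x * f x := by
        refine hdual.symm.trans (integral_congr_ae ?_)
        filter_upwards [h₂.coeFn_toLp] with x hx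
        rw [hx, SchwartzMap.fourier_coe, smul_eq_mul]
    _ = ∫ x, ψ x * 𝓕 f x := integral_fourier_mul_comm ψ.integrable h₁

lemma memLp_fourier (h₁ : Integrable f) (h₂ : MemLp f 2) : MemLp (𝓕 f) 2 :=
  (memLp_congr_ae (fourier_toLp_ae_eq h₁ h₂)).1 (Lp.memLp _)

lemma eLpNorm_fourier (h₁ : Integrable f) (h₂ : MemLp f 2) :
    eLpNorm (𝓕 f) 2 volume = eLpNorm f 2 volume := by
  rw [← eLpNorm_congr_ae (fourier_toLp_ae_eq h₁ h₂), ← Lp.enorm_def, ← ofReal_norm,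
    Lp.norm_fourier_eq, ofReal_norm, Lp.enorm_toLp]

end Fourier

section Chirp

variable {V : Type*} [NormedAddCommGroup V]

/-- The quadratic phase `e^{iσ|y|²}`. -/
def chirp (σ : ℝ) (y : V) : ℂ := Complex.exp ((σ * ‖y‖ ^ 2 : ℝ) * Complex.I)

@[simp]
lemma norm_chirp (σ : ℝ) (y : V) : ‖chirp σ y‖ = 1 := Complex.norm_exp_ofReal_mul_I _

@[simp]
lemma enorm_chirp (σ : ℝ) (y : V) : ‖chirp σ y‖ₑ = 1 := by
  rw [← ofReal_norm, norm_chirp, ENNReal.ofReal_one]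

lemma enorm_chirp_mul (φ : V → ℂ) (σ : ℝ) (y : V) : ‖chirp σ y * φ y‖ₑ = ‖φ y‖ₑ := by
  rw [enorm_mul, enorm_chirp, one_mul]

lemma continuous_uncurry_chirp : Continuous fun p : ℝ × V => chirp p.1 p.2 := by
  unfold chirp
  fun_prop

lemma continuous_chirp (σ : ℝ) : Continuous (chirp σ : V → ℂ) :=
  continuous_uncurry_chirp.comp (Continuous.prodMk_right σ)

lemma chirp_mul_conj_chirp (σ τ : ℝ) (y : V) : chirp σ y * conj (chirp τ y) = chirp (σ - τ) y := by
  simp only [chirp, ← Complex.exp_conj, ← Complex.exp_add, map_mul, Complex.conj_ofReal,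
    Complex.conj_I]
  push_cast
  ring_nf

lemma chirp_sub [InnerProductSpace ℝ V] (σ : ℝ) (x y : V) :
    chirp σ (x - y) =
      chirp σ x * (Complex.exp (↑(-2 * π * inner ℝ y ((σ / π) • x)) * Complex.I) * chirp σ y) := by
  simp only [chirp, ← Complex.exp_add, norm_sub_sq_real, real_inner_smul_right,
    real_inner_comm y x]
  congr 1
  have : (π : ℂ) ≠ 0 := by exact_mod_cast Real.pi_ne_zero
  push_cast
  field_simp
  ring

end Chirp

section Pairing

variable {V : Type*} [NormedAddCommGroup V] [InnerProductSpace ℝ V] [FiniteDimensional ℝ V]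
  [MeasurableSpace V] [BorelSpace V] {f g : V → ℂ} {b : ℂ}

lemma conj_fourier (f : V → ℂ) (ξ : V) : conj (𝓕 f ξ) = 𝓕 (fun y => conj (f (-y))) ξ := by
  rw [Real.fourier_eq', Real.fourier_eq', ← integral_conj, ← integral_neg_eq_self]
  refine integral_congr_ae (.of_forall fun y => ?_)
  simp only [smul_eq_mul, map_mul, ← Complex.exp_conj, Complex.conj_ofReal, Complex.conj_I,
    inner_neg_left, mul_neg, Complex.ofReal_neg, neg_mul, neg_neg]

lemma norm_fourier_modulated_gaussian_le (hb : 0 < b.re) (x w : V) :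
    ‖𝓕 (fun v : V => Complex.exp (-b * ‖v‖ ^ 2 + 2 * π * Complex.I * inner ℝ x v)) w‖ ≤
      (π / ‖b‖) ^ (finrank ℝ V / 2 : ℝ) := by
  have hexp : -π ^ 2 * ‖x - w‖ ^ 2 / b = ((-π ^ 2 * ‖x - w‖ ^ 2 : ℝ) : ℂ) * b⁻¹ := by
    push_cast
    ring
  have hpow : (finrank ℝ V / 2 : ℂ) = ((finrank ℝ V / 2 : ℝ) : ℂ) := by push_cast; rfl
  rw [fourier_gaussian_innerProductSpace' hb, norm_mul, hexp, Complex.norm_exp,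
    Complex.re_ofReal_mul, Complex.inv_re, hpow, Complex.norm_cpow_real, norm_div,
    Complex.norm_real, Real.norm_of_nonneg Real.pi_pos.le]
  refine mul_le_of_le_one_right (by positivity) (Real.exp_le_one_iff.2 ?_)
  have : 0 ≤ b.re / Complex.normSq b := div_nonneg hb.le (Complex.normSq_nonneg b)
  nlinarith [mul_nonneg (mul_nonneg (sq_nonneg π) (sq_nonneg ‖x - w‖)) this]

lemma enorm_fourier_gaussian_mul_fourier_le (hb : 0 < b.re) (hf : Integrable f) (x : V) :
    ‖𝓕 (fun y => Complex.exp (-b * ‖y‖ ^ 2) * 𝓕 f y) x‖ₑ ≤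
      ENNReal.ofReal ((π / ‖b‖) ^ (finrank ℝ V / 2 : ℝ)) * ∫⁻ y, ‖f y‖ₑ := by
  set G : V → ℂ := fun v => Complex.exp (-b * ‖v‖ ^ 2 + 2 * π * Complex.I * inner ℝ (-x) v)
  have hG : Integrable G := by
    simpa only [G, mul_assoc] using
      GaussianFourier.integrable_cexp_neg_mul_sq_norm_add hb (2 * π * Complex.I) (-x)
  have hswap : 𝓕 (fun y => Complex.exp (-b * ‖y‖ ^ 2) * 𝓕 f y) x = ∫ y, f y * 𝓕 G y := by
    rw [← integral_fourier_mul_comm hf hG, Real.fourier_eq']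
    refine integral_congr_ae (.of_forall fun y => ?_)
    simp only [G, smul_eq_mul, Complex.exp_add, inner_neg_left, real_inner_comm x y]
    push_cast
    ring_nf
  rw [hswap, mul_comm, ← lintegral_mul_const' _ _ ENNReal.ofReal_ne_top]
  refine (enorm_integral_le_lintegral_enorm _).trans (lintegral_mono fun y => ?_)
  rw [enorm_mul, ← ofReal_norm (𝓕 G y)]
  gcongr
  exact norm_fourier_modulated_gaussian_le hb _ _

lemma enorm_integral_gaussian_mul_fourier_mul_fourier_le (hb : 0 < b.re) (hf : Integrable f)
    (hg : Integrable g) :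
    ‖∫ y, Complex.exp (-b * ‖y‖ ^ 2) * (𝓕 f y * 𝓕 g y)‖ₑ ≤
      ENNReal.ofReal ((π / ‖b‖) ^ (finrank ℝ V / 2 : ℝ)) * (∫⁻ y, ‖f y‖ₑ) * ∫⁻ y, ‖g y‖ₑ := by
  set h : V → ℂ := fun y => Complex.exp (-b * ‖y‖ ^ 2) * 𝓕 g y
  have hgauss : Integrable fun y : V => Complex.exp (-b * ‖y‖ ^ 2) := by
    simpa using GaussianFourier.integrable_cexp_neg_mul_sq_norm_add hb 0 (0 : V)
  have hh : Integrable h :=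
    hgauss.mul_bdd (c := ∫ y, ‖g y‖) (continuous_fourier hg).aestronglyMeasurable
      (.of_forall fun y => VectorFourier.norm_fourierIntegral_le_integral_norm _ _ _ _ _)
  have hswap : ∫ y, Complex.exp (-b * ‖y‖ ^ 2) * (𝓕 f y * 𝓕 g y) = ∫ y, f y * 𝓕 h y := by
    rw [← integral_fourier_mul_comm hf hh]
    exact integral_congr_ae (.of_forall fun y => by simp only [h]; ring)
  rw [hswap, mul_right_comm, mul_comm, ← lintegral_mul_const'' _ hf.1.enorm]
  refine (enorm_integral_le_lintegral_enorm _).trans (lintegral_mono fun y => ?_)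
  rw [enorm_mul]
  gcongr
  exact enorm_fourier_gaussian_mul_fourier_le hb hg y

lemma integrable_fourier_mul_conj_fourier (hf₁ : Integrable f) (hf₂ : MemLp f 2)
    (hg₁ : Integrable g) (hg₂ : MemLp g 2) : Integrable fun y => 𝓕 f y * conj (𝓕 g y) :=
  (memLp_fourier hf₁ hf₂).integrable_mul (memLp_fourier hg₁ hg₂).star

lemma tendsto_integral_gaussian_mul {k : V → ℂ} (hk : Integrable k) (δ : ℝ) :
    Tendsto (fun ε : ℝ => ∫ y, Complex.exp (-(ε - δ * Complex.I) * ‖y‖ ^ 2) * k y) (𝓝[>] 0)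
      (𝓝 (∫ y, chirp δ y * k y)) := by
  refine tendsto_integral_filter_of_dominated_convergence (fun y => ‖k y‖) (.of_forall fun ε => ?_)
    ?_ hk.norm (.of_forall fun y => ?_)
  · exact (by fun_prop : Continuous fun y : V =>
      Complex.exp (-(ε - δ * Complex.I) * ‖y‖ ^ 2)).aestronglyMeasurable.mul hk.1
  · filter_upwards [self_mem_nhdsWithin] with ε (hε : 0 < ε)
    refine .of_forall fun y => ?_
    rw [norm_mul, Complex.norm_exp]
    refine mul_le_of_le_one_left (norm_nonneg _) (Real.exp_le_one_iff.2 ?_)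
    have : (-(ε - δ * Complex.I) * ‖y‖ ^ 2 : ℂ).re = -(ε * ‖y‖ ^ 2) := by
      simp [← Complex.ofReal_pow]
    rw [this]
    exact neg_nonpos.2 (by positivity)
  · have hcont : Continuous fun ε : ℝ =>
        Complex.exp (-(ε - δ * Complex.I) * ‖y‖ ^ 2) * k y := by fun_prop
    convert (hcont.tendsto 0).mono_left nhdsWithin_le_nhds using 3
    rw [chirp]
    push_cast
    ring_nf

lemma enorm_integral_chirp_mul_fourier_le_lintegral {δ : ℝ} (hδ : δ ≠ 0) (hf₁ : Integrable f)
    (hf₂ : MemLp f 2) (hg₁ : Integrable g) (hg₂ : MemLp g 2) :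
    ‖∫ y, chirp δ y * (𝓕 f y * conj (𝓕 g y))‖ₑ ≤
      ENNReal.ofReal ((π / |δ|) ^ (finrank ℝ V / 2 : ℝ)) * (∫⁻ y, ‖f y‖ₑ) * ∫⁻ y, ‖g y‖ₑ := by
  have hg' : Integrable fun y => conj (g (-y)) :=
    (LinearIsometryEquiv.integrable_comp_iff Complex.conjLIE).2 hg₁.comp_neg
  have hnorm : ∫⁻ y, ‖conj (g (-y))‖ₑ = ∫⁻ y, ‖g y‖ₑ := by
    simp only [RCLike.enorm_conj]
    exact lintegral_neg_eq_self fun y => ‖g y‖ₑ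
  refine le_of_tendsto (tendsto_integral_gaussian_mul
    (integrable_fourier_mul_conj_fourier hf₁ hf₂ hg₁ hg₂) δ).enorm ?_
  filter_upwards [self_mem_nhdsWithin] with ε (hε : 0 < ε)
  have hre : (ε - δ * Complex.I : ℂ).re = ε := by simp
  have him : (ε - δ * Complex.I : ℂ).im = -δ := by simp
  have hδ_le : |δ| ≤ ‖(ε - δ * Complex.I : ℂ)‖ := by
    simpa only [him, abs_neg] using Complex.abs_im_le_norm (ε - δ * Complex.I : ℂ)
  simp_rw [conj_fourier g]
  refine (enorm_integral_gaussian_mul_fourier_mul_fourier_le (by rwa [hre]) hf₁ hg').trans ?_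
  rw [hnorm]
  have := abs_pos.2 hδ
  gcongr

lemma enorm_integral_chirp_mul_fourier_le_eLpNorm (δ : ℝ) (hf₁ : Integrable f)
    (hf₂ : MemLp f 2) (hg₁ : Integrable g) (hg₂ : MemLp g 2) :
    ‖∫ y, chirp δ y * (𝓕 f y * conj (𝓕 g y))‖ₑ ≤ eLpNorm f 2 volume * eLpNorm g 2 volume := by
  have hF := memLp_fourier hf₁ hf₂
  have hG := memLp_fourier hg₁ hg₂
  rw [← eLpNorm_fourier hf₁ hf₂, ← eLpNorm_fourier hg₁ hg₂]
  refine (enorm_integral_le_lintegral_enorm _).trans ?_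
  simp only [enorm_mul, enorm_chirp, one_mul, RCLike.enorm_conj]
  exact lintegral_enorm_mul_enorm_le hF.1 hG.1

end Pairing

section PowerIntegrals

lemma lintegral_Ioc_zero_rpow {a c : ℝ} (ha : 0 < a) (hc : 0 ≤ c) :
    ∫⁻ t in Ioc 0 c, ENNReal.ofReal (t ^ (a - 1)) = ENNReal.ofReal (c ^ a / a) := by
  have hint : IntegrableOn (fun t : ℝ => t ^ (a - 1)) (Ioc 0 c) :=
    (intervalIntegrable_iff_integrableOn_Ioc_of_le hc).1
      (intervalIntegral.intervalIntegrable_rpow' (by linarith))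
  have hpos : ∀ᵐ t ∂volume.restrict (Ioc 0 c), 0 ≤ t ^ (a - 1) :=
    (ae_restrict_mem measurableSet_Ioc).mono fun t ht => Real.rpow_nonneg ht.1.le _
  rw [← ofReal_integral_eq_lintegral_ofReal hint hpos, ← intervalIntegral.integral_of_le hc,
    integral_rpow (.inl (by linarith)), sub_add_cancel, Real.zero_rpow ha.ne', sub_zero]

lemma lintegral_Ioi_rpow {a c : ℝ} (ha : 0 < a) (hc : 0 < c) :
    ∫⁻ t in Ioi c, ENNReal.ofReal (t ^ (-a - 1)) = ENNReal.ofReal (c ^ (-a) / a) := by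
  have hpos : ∀ᵐ t ∂volume.restrict (Ioi c), 0 ≤ t ^ (-a - 1) :=
    (ae_restrict_mem measurableSet_Ioi).mono fun t ht => Real.rpow_nonneg (hc.trans ht).le _
  rw [← ofReal_integral_eq_lintegral_ofReal (integrableOn_Ioi_rpow_of_lt (by linarith) hc) hpos,
    integral_Ioi_rpow_of_lt (by linarith) hc, sub_add_cancel, neg_div_neg_eq]

lemma lintegral_comp_abs (f : ℝ → ℝ≥0∞) : ∫⁻ x, f |x| = 2 * ∫⁻ x in Ioi 0, f x := by
  have hpos : ∫⁻ x in Ioi 0, f |x| = ∫⁻ x in Ioi 0, f x :=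
    setLIntegral_congr_fun measurableSet_Ioi fun x hx => by rw [abs_of_pos hx]
  have hneg : ∫⁻ x in Iic 0, f |x| = ∫⁻ x in Ioi 0, f |x| := by
    rw [← setLIntegral_congr Iio_ae_eq_Iic, ← lintegral_indicator measurableSet_Iio,
      ← lintegral_indicator measurableSet_Ioi, ← lintegral_neg_eq_self]
    exact lintegral_congr fun x => by simp [indicator]
  rw [← lintegral_add_compl _ measurableSet_Ioi, compl_Ioi, hneg, hpos, two_mul]

end PowerIntegrals

section StrichartzKernel

variable {p y z τ : ℝ}

/-- The decay in `τ` of the pairing of two unimodular pieces living on sets of measure `z ^ p`,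
with `p` half the dimension: the dispersive bound for `z ≤ τ`, and for `τ ≤ z` the geometric mean
of the dispersive and the energy bound that scales like `τ ^ (-1/2)`. -/
def strichartzKernel (p z τ : ℝ) : ℝ :=
  min (z ^ (p - 3 / 2) * τ ^ (-(1 / 2) : ℝ)) (z ^ (2 * p - 2) * τ ^ (-p))

lemma strichartzKernel_nonneg (hz : 0 ≤ z) (hτ : 0 ≤ τ) : 0 ≤ strichartzKernel p z τ :=
  le_min (by positivity) (by positivity)

lemma strichartzKernel_mono (hp : 3 / 2 ≤ p) (hy : 0 ≤ y) (hyz : y ≤ z) (hτ : 0 ≤ τ) :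
    strichartzKernel p y τ ≤ strichartzKernel p z τ := by
  have : 0 ≤ p - 3 / 2 := by linarith
  have : 0 ≤ 2 * p - 2 := by linarith
  unfold strichartzKernel
  gcongr

lemma min_le_strichartzKernel (hp : 3 / 2 ≤ p) (hz : 0 ≤ z) (hτ : 0 < τ) :
    min (z ^ (2 * p - 2) * τ ^ (-p)) (z ^ (p - 2)) ≤ strichartzKernel p z τ := by
  refine le_min ?_ (min_le_left _ _)
  rcases hz.eq_or_lt with rfl | hz
  · refine (min_le_left _ _).trans ?_
    rw [Real.zero_rpow (by linarith), zero_mul]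
    positivity
  rcases le_total z τ with h | h
  · calc min (z ^ (2 * p - 2) * τ ^ (-p)) (z ^ (p - 2))
        ≤ z ^ (2 * p - 2) * τ ^ (-p) := min_le_left _ _
      _ = z ^ (p - 3 / 2) * z ^ (p - 1 / 2) * τ ^ (-p) := by
          rw [← Real.rpow_add hz]
          ring_nf
      _ ≤ z ^ (p - 3 / 2) * τ ^ (p - 1 / 2) * τ ^ (-p) := by
          have : 0 ≤ p - 1 / 2 := by linarith
          gcongr
      _ = z ^ (p - 3 / 2) * τ ^ (-(1 / 2) : ℝ) := by
          rw [mul_assoc, ← Real.rpow_add hτ]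
          ring_nf
  · calc min (z ^ (2 * p - 2) * τ ^ (-p)) (z ^ (p - 2))
        ≤ z ^ (p - 2) := min_le_right _ _
      _ = z ^ (p - 3 / 2) * z ^ (-(1 / 2) : ℝ) := by
          rw [← Real.rpow_add hz]
          ring_nf
      _ ≤ z ^ (p - 3 / 2) * τ ^ (-(1 / 2) : ℝ) := by
          exact mul_le_mul_of_nonneg_left
            (Real.rpow_le_rpow_of_nonpos hτ h (by norm_num)) (by positivity)

lemma min_le_strichartzKernel_add (hp : 3 / 2 ≤ p) (hy : 0 ≤ y) (hz : 0 ≤ z) (hτ : 0 < τ) :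
    min (y ^ (p - 1) * z ^ (p - 1) * τ ^ (-p)) (y ^ (p / 2 - 1) * z ^ (p / 2 - 1)) ≤
      strichartzKernel p y τ + strichartzKernel p z τ := by
  have hsqrt (a : ℝ) : (y * z) ^ a = √(y * z) ^ (2 * a) := by
    rw [Real.sqrt_eq_rpow, ← Real.rpow_mul (by positivity)]
    ring_nf
  have hmean : √(y * z) ≤ max y z := Real.sqrt_le_left (hy.trans (le_max_left _ _)) |>.2 <| by
    rw [sq]
    exact mul_le_mul (le_max_left _ _) (le_max_right _ _) hz (hy.trans (le_max_left _ _))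
  calc min (y ^ (p - 1) * z ^ (p - 1) * τ ^ (-p)) (y ^ (p / 2 - 1) * z ^ (p / 2 - 1))
      = min (√(y * z) ^ (2 * p - 2) * τ ^ (-p)) (√(y * z) ^ (p - 2)) := by
        rw [← Real.mul_rpow hy hz, ← Real.mul_rpow hy hz, hsqrt, hsqrt]
        ring_nf
    _ ≤ strichartzKernel p (√(y * z)) τ := min_le_strichartzKernel hp (by positivity) hτ
    _ ≤ strichartzKernel p (max y z) τ := strichartzKernel_mono hp (by positivity) hmean hτ.le
    _ ≤ strichartzKernel p y τ + strichartzKernel p z τ := by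
        rcases max_choice y z with h | h <;> rw [h]
        · exact le_add_of_nonneg_right (strichartzKernel_nonneg hz hτ.le)
        · exact le_add_of_nonneg_left (strichartzKernel_nonneg hy hτ.le)

lemma lintegral_Ioc_strichartzKernel_le (hz : 0 < z) :
    ∫⁻ τ in Ioc 0 z, ENNReal.ofReal (strichartzKernel p z τ) ≤
      ENNReal.ofReal (2 * z ^ (p - 1)) :=
  calc ∫⁻ τ in Ioc 0 z, ENNReal.ofReal (strichartzKernel p z τ)
      ≤ ∫⁻ τ in Ioc 0 z, ENNReal.ofReal (z ^ (p - 3 / 2)) *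
          ENNReal.ofReal (τ ^ (1 / 2 - 1 : ℝ)) :=
        lintegral_mono fun τ => by
          rw [← ENNReal.ofReal_mul (by positivity)]
          exact ENNReal.ofReal_le_ofReal ((min_le_left _ _).trans_eq (by norm_num))
    _ = ENNReal.ofReal (2 * z ^ (p - 1)) := by
        rw [lintegral_const_mul' _ _ ENNReal.ofReal_ne_top,
          lintegral_Ioc_zero_rpow (by norm_num) hz.le, ← ENNReal.ofReal_mul (by positivity),
          mul_div_assoc', ← Real.rpow_add hz]
        ring_nf

lemma lintegral_Ioi_strichartzKernel_le (hp : 3 / 2 ≤ p) (hz : 0 < z) :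
    ∫⁻ τ in Ioi z, ENNReal.ofReal (strichartzKernel p z τ) ≤ ENNReal.ofReal (2 * z ^ (p - 1)) :=
  calc ∫⁻ τ in Ioi z, ENNReal.ofReal (strichartzKernel p z τ)
      ≤ ∫⁻ τ in Ioi z, ENNReal.ofReal (z ^ (2 * p - 2)) *
          ENNReal.ofReal (τ ^ (-(p - 1) - 1)) :=
        lintegral_mono fun τ => by
          rw [← ENNReal.ofReal_mul (by positivity)]
          exact ENNReal.ofReal_le_ofReal ((min_le_right _ _).trans_eq (by ring_nf))
    _ = ENNReal.ofReal (z ^ (p - 1) / (p - 1)) := by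
        rw [lintegral_const_mul' _ _ ENNReal.ofReal_ne_top,
          lintegral_Ioi_rpow (by linarith) hz, ← ENNReal.ofReal_mul (by positivity),
          mul_div_assoc', ← Real.rpow_add hz]
        ring_nf
    _ ≤ ENNReal.ofReal (2 * z ^ (p - 1)) := by
        refine ENNReal.ofReal_le_ofReal ((div_le_iff₀ (by linarith)).2 ?_)
        nlinarith [Real.rpow_pos_of_pos hz (p - 1)]

lemma lintegral_strichartzKernel_le (hp : 3 / 2 ≤ p) (hz : 0 ≤ z) :
    ∫⁻ τ, ENNReal.ofReal (strichartzKernel p z |τ|) ≤ ENNReal.ofReal (8 * z ^ (p - 1)) := by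
  rw [lintegral_comp_abs fun τ => ENNReal.ofReal (strichartzKernel p z τ)]
  rcases hz.eq_or_lt with rfl | hz
  · have h (τ : ℝ) : strichartzKernel p 0 τ ≤ 0 :=
      (min_le_right _ _).trans_eq (by rw [Real.zero_rpow (by linarith), zero_mul])
    simp [ENNReal.ofReal_of_nonpos (h _)]
  have hsplit : ∫⁻ τ in Ioi 0, ENNReal.ofReal (strichartzKernel p z τ) ≤
      ENNReal.ofReal (2 * z ^ (p - 1)) + ENNReal.ofReal (2 * z ^ (p - 1)) := by
    rw [← Ioc_union_Ioi_eq_Ioi hz.le]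
    exact (lintegral_union_le _ _ _).trans (add_le_add (lintegral_Ioc_strichartzKernel_le hz)
      (lintegral_Ioi_strichartzKernel_le hp hz))
  rw [← ENNReal.ofReal_add (by positivity) (by positivity)] at hsplit
  calc 2 * ∫⁻ τ in Ioi 0, ENNReal.ofReal (strichartzKernel p z τ)
      ≤ ENNReal.ofReal 2 * ENNReal.ofReal (2 * z ^ (p - 1) + 2 * z ^ (p - 1)) := by
        rw [ENNReal.ofReal_ofNat]
        gcongr
    _ = ENNReal.ofReal (8 * z ^ (p - 1)) := by
        rw [← ENNReal.ofReal_mul zero_le_two]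
        ring_nf

end StrichartzKernel

section TTStar

variable {S X : Type*} [MeasurableSpace S] [MeasurableSpace X] {ν : Measure S} [SFinite ν]
  {μ : Measure X} [SFinite μ]

lemma measurable_eLpNorm_of_measurable_uncurry {w : S → X → ℂ}
    (hw : Measurable (Function.uncurry w)) {p : ℝ≥0∞} (hp₀ : p ≠ 0) (hp : p ≠ ∞) :
    Measurable fun σ => eLpNorm (w σ) p μ := by
  simp only [eLpNorm_eq_lintegral_rpow_enorm_toReal hp₀ hp]
  exact (Measurable.lintegral_prod_right (hw.enorm.pow_const _)).pow_const _

lemma integrable_mul_conj_of_lintegral_eLpNorm_ne_top {w : S → X → ℂ}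
    (hw : Measurable (Function.uncurry w)) (hfin : ∫⁻ σ, eLpNorm (w σ) 2 μ ∂ν ≠ ∞) :
    Integrable (fun q : X × S × S => w q.2.1 q.1 * conj (w q.2.2 q.1)) (μ.prod (ν.prod ν)) := by
  have hmeas : Measurable fun q : X × S × S => w q.2.1 q.1 * conj (w q.2.2 q.1) :=
    (hw.comp (f := fun q : X × S × S => (q.2.1, q.1)) (by fun_prop)).mul
      (Complex.continuous_conj.measurable.comp
        (hw.comp (f := fun q : X × S × S => (q.2.2, q.1)) (by fun_prop)))
  have hsec (σ : S) : AEStronglyMeasurable (w σ) μ :=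
    (hw.comp measurable_prodMk_left).aestronglyMeasurable
  refine ⟨hmeas.aestronglyMeasurable, ?_⟩
  have hN := (measurable_eLpNorm_of_measurable_uncurry (μ := μ) hw two_ne_zero
    ENNReal.ofNat_ne_top).aemeasurable (μ := ν)
  calc ∫⁻ q, ‖w q.2.1 q.1 * conj (w q.2.2 q.1)‖ₑ ∂μ.prod (ν.prod ν)
      = ∫⁻ z, ∫⁻ y, ‖w z.1 y‖ₑ * ‖w z.2 y‖ₑ ∂μ ∂ν.prod ν := by
        rw [lintegral_prod_symm _ hmeas.enorm.aemeasurable]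
        simp only [enorm_mul, RCLike.enorm_conj]
    _ ≤ ∫⁻ z, eLpNorm (w z.1) 2 μ * eLpNorm (w z.2) 2 μ ∂ν.prod ν :=
        lintegral_mono fun z => lintegral_enorm_mul_enorm_le (hsec _) (hsec _)
    _ = (∫⁻ σ, eLpNorm (w σ) 2 μ ∂ν) * ∫⁻ σ, eLpNorm (w σ) 2 μ ∂ν := lintegral_prod_mul hN hN
    _ < ∞ := ENNReal.mul_lt_top hfin.lt_top hfin.lt_top

lemma lintegral_enorm_integral_sq_le {w : S → X → ℂ} (hw : Measurable (Function.uncurry w))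
    (hfin : ∫⁻ σ, eLpNorm (w σ) 2 μ ∂ν ≠ ∞) :
    ∫⁻ y, ‖∫ σ, w σ y ∂ν‖ₑ ^ 2 ∂μ ≤
      ∫⁻ z, ‖∫ y, w z.1 y * conj (w z.2 y) ∂μ‖ₑ ∂ν.prod ν := by
  have hint := integrable_mul_conj_of_lintegral_eLpNorm_ne_top hw hfin
  have hsq (y : X) : ∫ z, w z.1 y * conj (w z.2 y) ∂ν.prod ν =
      ((‖∫ σ, w σ y ∂ν‖ ^ 2 : ℝ) : ℂ) := by
    rw [integral_prod_mul (fun σ => w σ y) fun σ => conj (w σ y), integral_conj, Complex.mul_conj,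
      Complex.normSq_eq_norm_sq]
  have hint_sq : Integrable (fun y => ‖∫ σ, w σ y ∂ν‖ ^ 2) μ := by
    have h := hint.integral_prod_left
    simp only [hsq] at h
    simpa only [RCLike.re_to_complex, Complex.ofReal_re] using h.re
  calc ∫⁻ y, ‖∫ σ, w σ y ∂ν‖ₑ ^ 2 ∂μ
      = ENNReal.ofReal (∫ y, ‖∫ σ, w σ y ∂ν‖ ^ 2 ∂μ) := by
        rw [ofReal_integral_eq_lintegral_ofReal hint_sq (.of_forall fun y => by positivity)]
        exact lintegral_congr fun y => by rw [ENNReal.ofReal_pow (norm_nonneg _), ofReal_norm]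
    _ = ‖∫ y, ∫ z, w z.1 y * conj (w z.2 y) ∂ν.prod ν ∂μ‖ₑ := by
        simp only [hsq, integral_complex_ofReal]
        rw [← ofReal_norm, Complex.norm_real,
          Real.norm_of_nonneg (integral_nonneg fun y => by positivity)]
    _ = ‖∫ z, ∫ y, w z.1 y * conj (w z.2 y) ∂μ ∂ν.prod ν‖ₑ := by rw [integral_integral_swap hint]
    _ ≤ ∫⁻ z, ‖∫ y, w z.1 y * conj (w z.2 y) ∂μ‖ₑ ∂ν.prod ν := enorm_integral_le_lintegral_enorm _

end TTStar

section DualStrichartz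

variable {V : Type*} [NormedAddCommGroup V] [InnerProductSpace ℝ V] [FiniteDimensional ℝ V]
  [MeasurableSpace V] [BorelSpace V]

lemma measurable_uncurry_fourier {F : ℝ → V → ℂ} (hF : Measurable (Function.uncurry F)) :
    Measurable fun q : ℝ × V => 𝓕 (F q.1) q.2 := by
  simp only [Real.fourier_eq', smul_eq_mul]
  refine (StronglyMeasurable.integral_prod_right' (f := fun z : (ℝ × V) × V =>
    Complex.exp (↑(-2 * π * inner ℝ z.2 z.1.2) * Complex.I) * F z.1.1 z.2) ?_).measurable
  have hexp : Continuous fun z : (ℝ × V) × V =>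
      Complex.exp (↑(-2 * π * inner ℝ z.2 z.1.2) * Complex.I) := by fun_prop
  exact (hexp.measurable.mul (hF.comp (f := fun z : (ℝ × V) × V => (z.1.1, z.2))
    (by fun_prop))).stronglyMeasurable

lemma enorm_integral_chirp_mul_fourier_le_strichartzKernel (hV : 3 ≤ finrank ℝ V) {σ τ y z : ℝ}
    {f g : V → ℂ} (hστ : σ ≠ τ) (hy : 0 ≤ y) (hz : 0 ≤ z) (hf : AEStronglyMeasurable f)
    (hg : AEStronglyMeasurable g)
    (hf₁ : ∫⁻ x, ‖f x‖ₑ ≤ ENNReal.ofReal (y ^ (finrank ℝ V / 2 - 1 : ℝ)))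
    (hf₂ : eLpNorm f 2 volume ≤ ENNReal.ofReal (y ^ (finrank ℝ V / 2 / 2 - 1 : ℝ)))
    (hg₁ : ∫⁻ x, ‖g x‖ₑ ≤ ENNReal.ofReal (z ^ (finrank ℝ V / 2 - 1 : ℝ)))
    (hg₂ : eLpNorm g 2 volume ≤ ENNReal.ofReal (z ^ (finrank ℝ V / 2 / 2 - 1 : ℝ))) :
    ‖∫ x, chirp σ x * 𝓕 f x * conj (chirp τ x * 𝓕 g x)‖ₑ ≤
      ENNReal.ofReal (π ^ (finrank ℝ V / 2 : ℝ)) *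
        (ENNReal.ofReal (strichartzKernel (finrank ℝ V / 2) y |σ - τ|) +
          ENNReal.ofReal (strichartzKernel (finrank ℝ V / 2) z |σ - τ|)) := by
  have hp : (3 / 2 : ℝ) ≤ finrank ℝ V / 2 := by
    have : (3 : ℝ) ≤ finrank ℝ V := by exact_mod_cast hV
    linarith
  set p : ℝ := finrank ℝ V / 2
  have hδ : 0 < |σ - τ| := abs_pos.2 (sub_ne_zero.2 hστ)
  have hf₁' : Integrable f := ⟨hf, hf₁.trans_lt ENNReal.ofReal_lt_top⟩
  have hg₁' : Integrable g := ⟨hg, hg₁.trans_lt ENNReal.ofReal_lt_top⟩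
  have hf₂' : MemLp f 2 := ⟨hf, hf₂.trans_lt ENNReal.ofReal_lt_top⟩
  have hg₂' : MemLp g 2 := ⟨hg, hg₂.trans_lt ENNReal.ofReal_lt_top⟩
  have hchirp (x : V) : chirp σ x * 𝓕 f x * conj (chirp τ x * 𝓕 g x) =
      chirp (σ - τ) x * (𝓕 f x * conj (𝓕 g x)) := by
    rw [← chirp_mul_conj_chirp, map_mul]
    ring
  simp only [hchirp]
  have hdisp : ‖∫ x, chirp (σ - τ) x * (𝓕 f x * conj (𝓕 g x))‖ₑ ≤
      ENNReal.ofReal (π ^ p * (y ^ (p - 1) * z ^ (p - 1) * |σ - τ| ^ (-p))) := by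
    refine (enorm_integral_chirp_mul_fourier_le_lintegral (sub_ne_zero.2 hστ) hf₁' hf₂' hg₁'
      hg₂').trans ((mul_le_mul' (mul_le_mul_right hf₁ _) hg₁).trans_eq ?_)
    rw [← ENNReal.ofReal_mul (by positivity), ← ENNReal.ofReal_mul (by positivity),
      Real.div_rpow Real.pi_pos.le hδ.le, Real.rpow_neg hδ.le]
    congr 1
    ring
  have henergy : ‖∫ x, chirp (σ - τ) x * (𝓕 f x * conj (𝓕 g x))‖ₑ ≤
      ENNReal.ofReal (π ^ p * (y ^ (p / 2 - 1) * z ^ (p / 2 - 1))) := by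
    refine (enorm_integral_chirp_mul_fourier_le_eLpNorm _ hf₁' hf₂' hg₁' hg₂').trans
      ((mul_le_mul' hf₂ hg₂).trans ?_)
    rw [← ENNReal.ofReal_mul (by positivity)]
    refine ENNReal.ofReal_le_ofReal (le_mul_of_one_le_left (by positivity) ?_)
    exact Real.one_le_rpow (by linarith [Real.pi_gt_three]) (by linarith)
  rw [← ENNReal.ofReal_add (strichartzKernel_nonneg hy hδ.le) (strichartzKernel_nonneg hz hδ.le),
    ← ENNReal.ofReal_mul (by positivity)]
  refine (le_min hdisp henergy).trans ?_
  rw [← ENNReal.ofReal_min, ← mul_min_of_nonneg _ _ (by positivity)]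
  gcongr
  exact min_le_strichartzKernel_add hp hy hz hδ

lemma measurable_uncurry_strichartzKernel (p : ℝ) :
    Measurable (Function.uncurry (strichartzKernel p)) := by
  unfold strichartzKernel Function.uncurry
  fun_prop

lemma lintegral_prod_strichartzKernel_le {p : ℝ} (hp : 3 / 2 ≤ p) {ν : Measure ℝ} [SFinite ν]
    (hν : ν ≤ volume) {s : ℝ → ℝ} (hs : Measurable s) (hs₀ : ∀ σ, 0 ≤ s σ) :
    ∫⁻ z, ENNReal.ofReal (strichartzKernel p (s z.1) |z.1 - z.2|) ∂ν.prod ν ≤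
      8 * ∫⁻ σ, ENNReal.ofReal (s σ ^ (p - 1)) ∂ν := by
  have hmeas : Measurable fun z : ℝ × ℝ =>
      ENNReal.ofReal (strichartzKernel p (s z.1) |z.1 - z.2|) :=
    ((measurable_uncurry_strichartzKernel p).comp (f := fun z : ℝ × ℝ => (s z.1, |z.1 - z.2|))
      (by fun_prop)).ennreal_ofReal
  rw [lintegral_prod _ hmeas.aemeasurable, ← lintegral_const_mul' _ _ ENNReal.ofNat_ne_top]
  refine lintegral_mono fun σ => ?_
  calc ∫⁻ τ, ENNReal.ofReal (strichartzKernel p (s σ) |σ - τ|) ∂ν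
      ≤ ∫⁻ τ, ENNReal.ofReal (strichartzKernel p (s σ) |σ - τ|) := lintegral_mono' hν le_rfl
    _ = ∫⁻ τ, ENNReal.ofReal (strichartzKernel p (s σ) |τ|) :=
        lintegral_sub_left_eq_self (fun τ => ENNReal.ofReal (strichartzKernel p (s σ) |τ|)) σ
    _ ≤ ENNReal.ofReal (8 * s σ ^ (p - 1)) := lintegral_strichartzKernel_le hp (hs₀ σ)
    _ = 8 * ENNReal.ofReal (s σ ^ (p - 1)) := by
        rw [ENNReal.ofReal_mul (by norm_num), ENNReal.ofReal_ofNat]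

lemma ae_prod_fst_ne_snd {ν : Measure ℝ} [SFinite ν] (hν : ν ≤ volume) :
    ∀ᵐ z ∂ν.prod ν, z.1 ≠ z.2 := by
  have hset : {z : ℝ × ℝ | ¬z.1 ≠ z.2} = {z | z.1 = z.2} := by simp only [not_not]
  rw [ae_iff, hset, Measure.measure_prod_null (measurableSet_eq_fun measurable_fst measurable_snd)]
  refine .of_forall fun σ => measure_mono_null (t := {σ}) (fun τ hτ => hτ.symm) ?_
  exact le_zero_iff.1 ((hν {σ}).trans_eq Real.volume_singleton)

/-- The hypotheses on `F σ` hold for `(s σ)⁻¹` times a unimodular function on a set of measure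
`s σ ^ (finrank ℝ V / 2)`. -/
lemma lintegral_enorm_integral_chirp_mul_fourier_sq_le (hV : 3 ≤ finrank ℝ V) {ν : Measure ℝ}
    [SFinite ν] (hν : ν ≤ volume) {F : ℝ → V → ℂ} (hF : Measurable (Function.uncurry F))
    {s : ℝ → ℝ} (hs : Measurable s) (hs₀ : ∀ σ, 0 ≤ s σ)
    (hF₁ : ∀ σ, ∫⁻ x, ‖F σ x‖ₑ ≤ ENNReal.ofReal (s σ ^ (finrank ℝ V / 2 - 1 : ℝ)))
    (hF₂ : ∀ σ, eLpNorm (F σ) 2 volume ≤ ENNReal.ofReal (s σ ^ (finrank ℝ V / 2 / 2 - 1 : ℝ)))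
    (hfin : ∫⁻ σ, eLpNorm (F σ) 2 volume ∂ν ≠ ∞) :
    ∫⁻ y, ‖∫ σ, chirp σ y * 𝓕 (F σ) y ∂ν‖ₑ ^ 2 ≤
      ENNReal.ofReal (16 * π ^ (finrank ℝ V / 2 : ℝ)) *
        ∫⁻ σ, ENNReal.ofReal (s σ ^ (finrank ℝ V / 2 - 1 : ℝ)) ∂ν := by
  have hp : (3 / 2 : ℝ) ≤ finrank ℝ V / 2 := by
    have : (3 : ℝ) ≤ finrank ℝ V := by exact_mod_cast hV
    linarith
  set p : ℝ := finrank ℝ V / 2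
  have hsec (σ : ℝ) : AEStronglyMeasurable (F σ) :=
    (hF.comp measurable_prodMk_left).aestronglyMeasurable
  have hmeas : Measurable (Function.uncurry fun (σ : ℝ) (y : V) => chirp σ y * 𝓕 (F σ) y) :=
    continuous_uncurry_chirp.measurable.mul (measurable_uncurry_fourier hF)
  have hL2 (σ : ℝ) :
      eLpNorm (fun y => chirp σ y * 𝓕 (F σ) y) 2 volume = eLpNorm (F σ) 2 volume := by
    rw [← eLpNorm_fourier ⟨hsec σ, (hF₁ σ).trans_lt ENNReal.ofReal_lt_top⟩
      ⟨hsec σ, (hF₂ σ).trans_lt ENNReal.ofReal_lt_top⟩]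
    exact eLpNorm_congr_enorm_ae (.of_forall fun y => by rw [enorm_mul, enorm_chirp, one_mul])
  have hswap : ∫⁻ z, ENNReal.ofReal (strichartzKernel p (s z.2) |z.1 - z.2|) ∂ν.prod ν =
      ∫⁻ z, ENNReal.ofReal (strichartzKernel p (s z.1) |z.1 - z.2|) ∂ν.prod ν := by
    rw [← lintegral_prod_swap]
    simp only [Prod.fst_swap, Prod.snd_swap, abs_sub_comm]
  have hle := lintegral_prod_strichartzKernel_le hp hν hs hs₀
  calc ∫⁻ y, ‖∫ σ, chirp σ y * 𝓕 (F σ) y ∂ν‖ₑ ^ 2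
      ≤ ∫⁻ z, ‖∫ y, chirp z.1 y * 𝓕 (F z.1) y * conj (chirp z.2 y * 𝓕 (F z.2) y)‖ₑ ∂ν.prod ν :=
        lintegral_enorm_integral_sq_le hmeas (by simpa only [hL2] using hfin)
    _ ≤ ∫⁻ z, ENNReal.ofReal (π ^ p) *
          (ENNReal.ofReal (strichartzKernel p (s z.1) |z.1 - z.2|) +
            ENNReal.ofReal (strichartzKernel p (s z.2) |z.1 - z.2|)) ∂ν.prod ν :=
        lintegral_mono_ae <| (ae_prod_fst_ne_snd hν).mono fun z hz =>
          enorm_integral_chirp_mul_fourier_le_strichartzKernel hV hz (hs₀ _) (hs₀ _) (hsec _)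
            (hsec _) (hF₁ _) (hF₂ _) (hF₁ _) (hF₂ _)
    _ ≤ ENNReal.ofReal (π ^ p) * (8 * ∫⁻ σ, ENNReal.ofReal (s σ ^ (p - 1)) ∂ν +
          8 * ∫⁻ σ, ENNReal.ofReal (s σ ^ (p - 1)) ∂ν) := by
        rw [lintegral_const_mul' _ _ ENNReal.ofReal_ne_top, lintegral_add_left, hswap]
        · gcongr
        · exact ((measurable_uncurry_strichartzKernel p).comp
            (f := fun z : ℝ × ℝ => (s z.1, |z.1 - z.2|)) (by fun_prop)).ennreal_ofReal
    _ = ENNReal.ofReal (16 * π ^ p) * ∫⁻ σ, ENNReal.ofReal (s σ ^ (p - 1)) ∂ν := by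
        rw [ENNReal.ofReal_mul (by norm_num), ENNReal.ofReal_ofNat]
        ring

end DualStrichartz

section ChirpFourier

variable {V : Type*} [NormedAddCommGroup V] [InnerProductSpace ℝ V] [FiniteDimensional ℝ V]
  [MeasurableSpace V] [BorelSpace V] {φ ψ : V → ℂ}

/-- The Fourier transform of `e^{iσ|y|²} φ(y)`: up to scaling and a unimodular factor this is
the Schrödinger evolution of `φ` at time `1 / (4σ)`. -/
def chirpFourier (φ : V → ℂ) (σ : ℝ) : V → ℂ := 𝓕 fun y => chirp σ y * φ y

lemma integrable_chirp_mul (hφ : Integrable φ) (σ : ℝ) : Integrable fun y => chirp σ y * φ y :=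
  hφ.bdd_mul (continuous_chirp σ).aestronglyMeasurable (.of_forall fun y => (norm_chirp σ y).le)

lemma memLp_chirp_mul (hφ : MemLp φ 2) (σ : ℝ) : MemLp (fun y => chirp σ y * φ y) 2 :=
  hφ.of_le ((continuous_chirp σ).aestronglyMeasurable.mul hφ.1)
    (.of_forall fun y => by rw [norm_mul, norm_chirp, one_mul])

lemma enorm_chirpFourier_le (φ : V → ℂ) (σ : ℝ) (ξ : V) :
    ‖chirpFourier φ σ ξ‖ₑ ≤ ∫⁻ y, ‖φ y‖ₑ :=
  (enorm_fourier_le _ ξ).trans_eq (lintegral_congr fun y => enorm_chirp_mul φ σ y)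

lemma norm_chirpFourier_le (φ : V → ℂ) (σ : ℝ) (ξ : V) : ‖chirpFourier φ σ ξ‖ ≤ ∫ y, ‖φ y‖ := by
  refine (VectorFourier.norm_fourierIntegral_le_integral_norm _ _ _ _ _).trans_eq ?_
  simp only [norm_mul, norm_chirp, one_mul]

lemma eLpNorm_chirpFourier (h₁ : Integrable φ) (h₂ : MemLp φ 2) (σ : ℝ) :
    eLpNorm (chirpFourier φ σ) 2 volume = eLpNorm φ 2 volume :=
  (eLpNorm_fourier (integrable_chirp_mul h₁ σ) (memLp_chirp_mul h₂ σ)).trans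
    (eLpNorm_congr_enorm_ae (.of_forall fun y => enorm_chirp_mul φ σ y))

lemma continuous_uncurry_chirpFourier (hφ : Integrable φ) :
    Continuous (Function.uncurry (chirpFourier φ)) := by
  unfold Function.uncurry chirpFourier
  simp only [Real.fourier_eq]
  refine continuous_of_dominated (bound := fun y => ‖φ y‖) (fun q => ?_) (fun q => ?_) hφ.norm ?_
  · exact (Real.fourierIntegral_convergent_iff q.2).2 (integrable_chirp_mul hφ q.1) |>.1
  · exact .of_forall fun y => by rw [Circle.norm_smul, norm_mul, norm_chirp, one_mul]
  · refine .of_forall fun y => ?_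
    have : Continuous fun q : ℝ × V => chirp q.1 y :=
      continuous_uncurry_chirp.comp (Continuous.prodMk_left y |>.comp continuous_fst)
    have : Continuous fun q : ℝ × V => Real.fourierChar (-inner ℝ y q.2) :=
      Real.continuous_fourierChar.comp (by fun_prop)
    fun_prop

lemma chirpFourier_add (hφ : Integrable φ) (hψ : Integrable ψ) (σ : ℝ) (ξ : V) :
    chirpFourier (fun y => φ y + ψ y) σ ξ = chirpFourier φ σ ξ + chirpFourier ψ σ ξ := by
  simp only [chirpFourier, mul_add]
  exact congrFun (VectorFourier.fourierIntegral_add Real.continuous_fourierChar continuous_inner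
    (integrable_chirp_mul hφ σ) (integrable_chirp_mul hψ σ)) ξ

lemma integral_mul_chirpFourier {ν : Measure ℝ} [SFinite ν] (hφ : Integrable φ) {F : ℝ → V → ℂ}
    (hF : Measurable (Function.uncurry F))
    (hF_int : Integrable (Function.uncurry F) (ν.prod volume)) :
    ∫ q, F q.1 q.2 * chirpFourier φ q.1 q.2 ∂ν.prod volume =
      ∫ y, φ y * ∫ σ, chirp σ y * 𝓕 (F σ) y ∂ν := by
  have hV : Integrable (fun q : ℝ × V => F q.1 q.2 * chirpFourier φ q.1 q.2) (ν.prod volume) :=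
    hF_int.mul_bdd (c := ∫ y, ‖φ y‖) (continuous_uncurry_chirpFourier hφ).aestronglyMeasurable
      (.of_forall fun q => norm_chirpFourier_le φ q.1 q.2)
  have hW : Integrable (fun q : ℝ × V => φ q.2 * (chirp q.1 q.2 * 𝓕 (F q.1) q.2))
      (ν.prod volume) := by
    refine (hF_int.integral_norm_prod_left.mul_prod hφ.norm).mono'
      (hφ.1.comp_snd.mul (continuous_uncurry_chirp.measurable.mul
        (measurable_uncurry_fourier hF)).aestronglyMeasurable) (.of_forall fun q => ?_)
    rw [norm_mul, norm_mul, norm_chirp, one_mul, mul_comm]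
    gcongr
    exact VectorFourier.norm_fourierIntegral_le_integral_norm _ _ _ _ _
  calc ∫ q, F q.1 q.2 * chirpFourier φ q.1 q.2 ∂ν.prod volume
      = ∫ σ, (∫ ξ, F σ ξ * chirpFourier φ σ ξ) ∂ν := integral_prod _ hV
    _ = ∫ σ, (∫ y, φ y * (chirp σ y * 𝓕 (F σ) y)) ∂ν := by
        refine integral_congr_ae (hF_int.prod_right_ae.mono fun σ hσ => ?_)
        refine (integral_fourier_mul_comm hσ (integrable_chirp_mul hφ σ)).symm.trans
          (integral_congr_ae (.of_forall fun y => ?_))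
        simp only [Function.uncurry]
        ring
    _ = ∫ y, φ y * ∫ σ, chirp σ y * 𝓕 (F σ) y ∂ν := by
        rw [integral_integral_swap hW]
        simp only [integral_const_mul]

end ChirpFourier

section DualPhase

variable {X : Type*} {E : Set (ℝ × X)} {s : ℝ → ℝ}
  {u : ℝ → X → ℂ}

/-- The function `(s σ)⁻¹ ū / |u|` on `E`, extended by zero: testing `u` against it returns the
weighted integral of `|u|` over `E`. -/
def dualPhase (E : Set (ℝ × X)) (s : ℝ → ℝ) (u : ℝ → X → ℂ) (σ : ℝ) (x : X) : ℂ :=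
  E.indicator (fun q => ((s q.1)⁻¹ : ℝ) * (conj (u q.1 q.2) / ‖u q.1 q.2‖)) (σ, x)

lemma dualPhase_mul (E : Set (ℝ × X)) (hs₀ : ∀ σ, 0 ≤ s σ) (u : ℝ → X → ℂ) (σ : ℝ) (x : X) :
    dualPhase E s u σ x * u σ x = ‖dualPhase E s u σ x * u σ x‖ := by
  by_cases hx : (σ, x) ∈ E
  · have h : dualPhase E s u σ x * u σ x = (((s σ)⁻¹ * (‖u σ x‖ ^ 2 / ‖u σ x‖) : ℝ) : ℂ) := by
      rw [dualPhase, indicator_of_mem hx, mul_assoc, div_mul_eq_mul_div, mul_comm (conj _),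
        Complex.mul_conj, Complex.normSq_eq_norm_sq]
      push_cast
      rfl
    have := inv_nonneg.2 (hs₀ σ)
    rw [h, Complex.norm_real, Real.norm_of_nonneg (by positivity)]
  · simp [dualPhase, hx]

lemma enorm_dualPhase (hu : ∀ q ∈ E, u q.1 q.2 ≠ 0) (σ : ℝ) (x : X) :
    ‖dualPhase E s u σ x‖ₑ = ‖(Prod.mk σ ⁻¹' E).indicator (fun _ => (s σ)⁻¹) x‖ₑ := by
  by_cases hx : (σ, x) ∈ E
  · have hne : ‖u σ x‖ ≠ 0 := norm_ne_zero_iff.2 (hu _ hx)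
    rw [dualPhase, indicator_of_mem hx, indicator_of_mem (mem_preimage.2 hx), ← ofReal_norm,
      norm_mul, norm_div, Complex.norm_conj, Complex.norm_real, Complex.norm_real, norm_norm,
      div_self hne, mul_one, ofReal_norm]
  · simp [dualPhase, hx]

variable [MeasurableSpace X] {μ : Measure X}

lemma measurable_uncurry_dualPhase (hE : MeasurableSet E) (hs : Measurable s)
    (hu : Measurable (Function.uncurry u)) : Measurable (Function.uncurry (dualPhase E s u)) :=
  Measurable.indicator ((Complex.measurable_ofReal.comp (hs.inv.comp measurable_fst)).mul
    ((Complex.continuous_conj.measurable.comp hu).div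
      (Complex.measurable_ofReal.comp hu.norm))) hE

lemma eLpNorm_dualPhase {p q : ℝ} (hE : MeasurableSet E) (hu : ∀ q ∈ E, u q.1 q.2 ≠ 0) {σ : ℝ}
    (hσ : 0 < s σ) (hm : μ (Prod.mk σ ⁻¹' E) = ENNReal.ofReal (s σ ^ p)) (hq : 0 < q) :
    eLpNorm (dualPhase E s u σ) (ENNReal.ofReal q) μ = ENNReal.ofReal (s σ ^ (p / q - 1)) := by
  rw [eLpNorm_congr_enorm_ae (.of_forall (enorm_dualPhase hu σ)),
    eLpNorm_indicator_const (measurable_prodMk_left hE) (ENNReal.ofReal_pos.2 hq).ne'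
      ENNReal.ofReal_ne_top, hm, ENNReal.toReal_ofReal hq.le, Real.enorm_of_nonneg (by positivity),
    ENNReal.ofReal_rpow_of_nonneg (by positivity) (by positivity),
    ← ENNReal.ofReal_mul (by positivity), ← Real.rpow_mul hσ.le, ← Real.rpow_neg_one,
    ← Real.rpow_add hσ]
  ring_nf

lemma eLpNorm_dualPhase_le {p q : ℝ} (hE : MeasurableSet E) (hu : ∀ q ∈ E, u q.1 q.2 ≠ 0)
    {σ : ℝ} (hσ : 0 ≤ s σ) (hm : μ (Prod.mk σ ⁻¹' E) = ENNReal.ofReal (s σ ^ p)) (hq : 0 < q) :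
    eLpNorm (dualPhase E s u σ) (ENNReal.ofReal q) μ ≤ ENNReal.ofReal (s σ ^ (p / q - 1)) := by
  rcases hσ.eq_or_lt with hσ | hσ
  · have h : dualPhase E s u σ = 0 := by
      funext x
      by_cases hx : (σ, x) ∈ E <;> simp [dualPhase, hx, ← hσ]
    simp [h]
  · exact (eLpNorm_dualPhase hE hu hσ hm hq).le

end DualPhase

section WeakStrichartz

variable {V : Type*} [NormedAddCommGroup V] [InnerProductSpace ℝ V] [FiniteDimensional ℝ V]
  [MeasurableSpace V] [BorelSpace V] {φ : V → ℂ}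

lemma eLpNorm_two_sq {X : Type*} [MeasurableSpace X] {μ : Measure X} (f : X → ℂ) :
    eLpNorm f 2 μ ^ 2 = ∫⁻ x, ‖f x‖ₑ ^ 2 ∂μ := by
  simpa using eLpNorm_nnreal_pow_eq_lintegral (f := f) (μ := μ) (p := 2) two_ne_zero

lemma setLIntegral_rpow_ne_top {a b : ℝ} (ha : 0 < a) {T : Set ℝ} (hT : MeasurableSet T)
    (hT_fin : volume T ≠ ∞) {s : ℝ → ℝ} (hsT : ∀ σ ∈ T, s σ ∈ Icc a b) (e : ℝ) :
    ∫⁻ σ in T, ENNReal.ofReal (s σ ^ e) ≠ ∞ := by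
  have hbound (σ : ℝ) (hσ : σ ∈ T) : s σ ^ e ≤ max (a ^ e) (b ^ e) := by
    obtain ⟨has, hsb⟩ := hsT σ hσ
    rcases le_total 0 e with he | he
    · exact le_max_of_le_right (Real.rpow_le_rpow (ha.le.trans has) hsb he)
    · exact le_max_of_le_left (Real.rpow_le_rpow_of_nonpos ha has he)
  refine ((setLIntegral_mono' hT fun σ hσ =>
    ENNReal.ofReal_le_ofReal (hbound σ hσ)).trans_lt ?_).ne
  rw [setLIntegral_const]
  exact ENNReal.mul_lt_top ENNReal.ofReal_lt_top hT_fin.lt_top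

lemma mul_lintegral_enorm_le_eLpNorm_mul {ν : Measure ℝ} [SFinite ν] (hφ : Integrable φ) {l : ℝ}
    {F : ℝ → V → ℂ} (hF : Measurable (Function.uncurry F))
    (hF_int : Integrable (Function.uncurry F) (ν.prod volume))
    (hFl : ∀ σ ξ, F σ ξ ≠ 0 → l ≤ ‖chirpFourier φ σ ξ‖)
    (hF_mul : ∀ σ ξ, F σ ξ * chirpFourier φ σ ξ = ‖F σ ξ * chirpFourier φ σ ξ‖) :
    ENNReal.ofReal l * ∫⁻ q, ‖F q.1 q.2‖ₑ ∂ν.prod volume ≤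
      eLpNorm φ 2 volume * eLpNorm (fun y => ∫ σ, chirp σ y * 𝓕 (F σ) y ∂ν) 2 volume := by
  set u : ℝ × V → ℂ := fun q => F q.1 q.2 * chirpFourier φ q.1 q.2
  have hu : Integrable u (ν.prod volume) :=
    hF_int.mul_bdd (c := ∫ y, ‖φ y‖) (continuous_uncurry_chirpFourier hφ).aestronglyMeasurable
      (.of_forall fun q => norm_chirpFourier_le φ q.1 q.2)
  have hW : AEStronglyMeasurable (fun y => ∫ σ, chirp σ y * 𝓕 (F σ) y ∂ν) :=
    (continuous_uncurry_chirp.measurable.mul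
      (measurable_uncurry_fourier hF)).stronglyMeasurable.integral_prod_left'.aestronglyMeasurable
  calc ENNReal.ofReal l * ∫⁻ q, ‖F q.1 q.2‖ₑ ∂ν.prod volume
      ≤ ∫⁻ q, ‖u q‖ₑ ∂ν.prod volume := by
        rw [← lintegral_const_mul' _ _ ENNReal.ofReal_ne_top]
        refine lintegral_mono fun q => ?_
        by_cases hq : F q.1 q.2 = 0
        · simp [hq]
        · rw [enorm_mul, mul_comm, ← ofReal_norm (chirpFourier φ q.1 q.2)]
          gcongr
          exact hFl _ _ hq
    _ = ‖∫ q, u q ∂ν.prod volume‖ₑ := by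
        rw [← ofReal_integral_norm_eq_lintegral_enorm hu,
          integral_congr_ae (g := fun q => (‖u q‖ : ℂ)) (.of_forall fun q => hF_mul q.1 q.2),
          integral_complex_ofReal, ← ofReal_norm,
          Complex.norm_real, Real.norm_of_nonneg (integral_nonneg fun q => norm_nonneg _)]
    _ = ‖∫ y, φ y * ∫ σ, chirp σ y * 𝓕 (F σ) y ∂ν‖ₑ := by
        rw [integral_mul_chirpFourier hφ hF hF_int]
    _ ≤ ∫⁻ y, ‖φ y‖ₑ * ‖∫ σ, chirp σ y * 𝓕 (F σ) y ∂ν‖ₑ := by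
        simpa only [enorm_mul] using enorm_integral_le_lintegral_enorm
          fun y => φ y * ∫ σ, chirp σ y * 𝓕 (F σ) y ∂ν
    _ ≤ _ := lintegral_enorm_mul_enorm_le hφ.1 hW

lemma sq_mul_le_of_mul_le_mul {l A C J W : ℝ≥0∞} (hJ : J ≠ ∞) (h : l * J ≤ A * W)
    (hW : W ^ 2 ≤ C * J) : l ^ 2 * J ≤ C * A ^ 2 := by
  rcases eq_or_ne J 0 with rfl | hJ₀
  · simp
  refine (ENNReal.mul_le_mul_iff_left hJ₀ hJ).1 ?_
  calc l ^ 2 * J * J = (l * J) ^ 2 := by ring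
    _ ≤ (A * W) ^ 2 := pow_le_pow_left' h 2
    _ ≤ A ^ 2 * (C * J) := by
        rw [mul_pow]
        gcongr
    _ = C * A ^ 2 * J := by ring

lemma sq_mul_setLIntegral_rpow_le (hV : 3 ≤ finrank ℝ V) (hφ : Integrable φ)
    {l a b : ℝ} (hl : 0 < l) (ha : 0 < a) {T : Set ℝ} (hT : MeasurableSet T)
    (hT_fin : volume T ≠ ∞) {E : Set (ℝ × V)} (hE : MeasurableSet E)
    (hEl : ∀ q ∈ E, l < ‖chirpFourier φ q.1 q.2‖) {s : ℝ → ℝ} (hs : Measurable s)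
    (hs₀ : ∀ σ, 0 ≤ s σ) (hsT : ∀ σ ∈ T, s σ ∈ Icc a b)
    (hm : ∀ σ, volume (Prod.mk σ ⁻¹' E) = ENNReal.ofReal (s σ ^ (finrank ℝ V / 2 : ℝ))) :
    ENNReal.ofReal l ^ 2 *
        ∫⁻ σ in T, ENNReal.ofReal (s σ ^ (finrank ℝ V / 2 - 1 : ℝ)) ≤
      ENNReal.ofReal (16 * π ^ (finrank ℝ V / 2 : ℝ)) * eLpNorm φ 2 volume ^ 2 := by
  set u := chirpFourier φ
  have hu : Measurable (Function.uncurry u) := (continuous_uncurry_chirpFourier hφ).measurable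
  have hu₀ : ∀ q ∈ E, u q.1 q.2 ≠ 0 := fun q hq => norm_pos_iff.1 (hl.trans (hEl q hq))
  set F := dualPhase E s u
  have hF : Measurable (Function.uncurry F) := measurable_uncurry_dualPhase hE hs hu
  set J := ∫⁻ σ in T, ENNReal.ofReal (s σ ^ (finrank ℝ V / 2 - 1 : ℝ))
  have hJ : J ≠ ∞ := setLIntegral_rpow_ne_top ha hT hT_fin hsT _
  have hF₁ (σ : ℝ) : ∫⁻ x, ‖F σ x‖ₑ ≤ ENNReal.ofReal (s σ ^ (finrank ℝ V / 2 - 1 : ℝ)) := by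
    simpa [eLpNorm_one_eq_lintegral_enorm] using
      eLpNorm_dualPhase_le hE hu₀ (hs₀ σ) (hm σ) one_pos
  have hF₂ (σ : ℝ) :
      eLpNorm (F σ) 2 volume ≤ ENNReal.ofReal (s σ ^ (finrank ℝ V / 2 / 2 - 1 : ℝ)) := by
    simpa using eLpNorm_dualPhase_le hE hu₀ (hs₀ σ) (hm σ) two_pos
  have hF_lintegral : ∫⁻ q, ‖F q.1 q.2‖ₑ ∂(volume.restrict T).prod volume = J := by
    refine (lintegral_prod _ hF.enorm.aemeasurable).trans
      (setLIntegral_congr_fun hT fun σ hσ => ?_)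
    simpa [eLpNorm_one_eq_lintegral_enorm] using
      eLpNorm_dualPhase hE hu₀ (ha.trans_le (hsT σ hσ).1) (hm σ) one_pos
  have hFl (σ : ℝ) (ξ : V) (h : F σ ξ ≠ 0) : l ≤ ‖u σ ξ‖ :=
    (hEl _ (mem_of_indicator_ne_zero h)).le
  have hdual := mul_lintegral_enorm_le_eLpNorm_mul hφ hF
    ⟨hF.aestronglyMeasurable, hF_lintegral.trans_lt hJ.lt_top⟩ hFl (dualPhase_mul E hs₀ u)
  have hstrichartz := lintegral_enorm_integral_chirp_mul_fourier_sq_le hV Measure.restrict_le_self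
    hF hs hs₀ hF₁ hF₂ (ne_top_of_le_ne_top (setLIntegral_rpow_ne_top ha hT hT_fin hsT _)
      (lintegral_mono hF₂))
  rw [← eLpNorm_two_sq] at hstrichartz
  rw [hF_lintegral] at hdual
  exact sq_mul_le_of_mul_le_mul hJ hdual hstrichartz

lemma measurable_measure_lt_norm_chirpFourier_inter (hφ : Integrable φ) (l : ℝ) {B : Set V}
    (hB : MeasurableSet B) :
    Measurable fun σ => volume ({ξ | l < ‖chirpFourier φ σ ξ‖} ∩ B) :=
  measurable_measure_prodMk_left <| (measurableSet_lt measurable_const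
    (continuous_uncurry_chirpFourier hφ).measurable.norm).inter (measurable_snd hB)

lemma sq_mul_setLIntegral_measure_rpow_le (hV : 3 ≤ finrank ℝ V) (hφ : Integrable φ) {l : ℝ}
    (hl : 0 < l) {T : Set ℝ} (hT : MeasurableSet T) (hT_fin : volume T ≠ ∞) {B : Set V}
    (hB : MeasurableSet B) (hB_fin : volume B ≠ ∞) {ε : ℝ} (hε : 0 < ε)
    (hTε : ∀ σ ∈ T, ENNReal.ofReal ε ≤ volume ({ξ | l < ‖chirpFourier φ σ ξ‖} ∩ B)) :
    ENNReal.ofReal l ^ 2 * ∫⁻ σ in T, volume ({ξ | l < ‖chirpFourier φ σ ξ‖} ∩ B) ^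
        ((finrank ℝ V - 2) / finrank ℝ V : ℝ) ≤
      ENNReal.ofReal (16 * π ^ (finrank ℝ V / 2 : ℝ)) * eLpNorm φ 2 volume ^ 2 := by
  have hD : (3 : ℝ) ≤ finrank ℝ V := by exact_mod_cast hV
  set D : ℝ := (finrank ℝ V : ℝ)
  set k : ℝ → ℝ≥0∞ := fun σ => volume ({ξ | l < ‖chirpFourier φ σ ξ‖} ∩ B)
  have hk : Measurable k := measurable_measure_lt_norm_chirpFourier_inter hφ l hB
  have hk_le (σ : ℝ) : k σ ≤ volume B := measure_mono inter_subset_right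
  have hk_top (σ : ℝ) : k σ ≠ ∞ := ne_top_of_le_ne_top hB_fin (hk_le σ)
  set E : Set (ℝ × V) := {q | l < ‖chirpFourier φ q.1 q.2‖} ∩ Prod.snd ⁻¹' B
  have hE : MeasurableSet E := (measurableSet_lt measurable_const
    (continuous_uncurry_chirpFourier hφ).measurable.norm).inter (measurable_snd hB)
  set s : ℝ → ℝ := fun σ => (k σ).toReal ^ (2 / D)
  have hs_pow (σ e : ℝ) :
      ENNReal.ofReal (s σ ^ e) = ENNReal.ofReal ((k σ).toReal ^ (2 / D * e)) := by
    rw [Real.rpow_mul ENNReal.toReal_nonneg]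
  have hm (σ : ℝ) : volume (Prod.mk σ ⁻¹' E) = ENNReal.ofReal (s σ ^ (D / 2)) := by
    rw [hs_pow, div_mul_div_cancel₀ (by positivity), div_self two_ne_zero, Real.rpow_one,
      ENNReal.ofReal_toReal (hk_top σ)]
    rfl
  have hsT (σ : ℝ) (hσ : σ ∈ T) : s σ ∈ Icc (ε ^ (2 / D)) ((volume B).toReal ^ (2 / D)) :=
    ⟨Real.rpow_le_rpow hε.le ((ENNReal.ofReal_le_iff_le_toReal (hk_top σ)).1 (hTε σ hσ))
        (by positivity),
      Real.rpow_le_rpow ENNReal.toReal_nonneg (ENNReal.toReal_mono hB_fin (hk_le σ))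
        (by positivity)⟩
  have h := sq_mul_setLIntegral_rpow_le hV hφ hl (Real.rpow_pos_of_pos hε _) hT hT_fin hE
    (fun q hq => hq.1) (hk.ennreal_toReal.pow_const _) (fun σ => by positivity) hsT hm
  refine le_of_eq_of_le ?_ h
  congr 1
  refine lintegral_congr fun σ => ?_
  have hθ : 2 / D * (D / 2 - 1) = (D - 2) / D := by field_simp
  rw [hs_pow, hθ, ← ENNReal.ofReal_rpow_of_nonneg ENNReal.toReal_nonneg
    (div_nonneg (by linarith) (by linarith)), ENNReal.ofReal_toReal (hk_top σ)]

lemma tendsto_measure_inter_closedBall (S : Set V) :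
    Tendsto (fun n : ℕ => volume (S ∩ Metric.closedBall 0 n)) atTop (𝓝 (volume S)) := by
  have h := tendsto_measure_iUnion_atTop (μ := volume)
    (s := fun n : ℕ => S ∩ Metric.closedBall (0 : V) n) fun m n hmn =>
      inter_subset_inter_right S (Metric.closedBall_subset_closedBall (by exact_mod_cast hmn))
  rwa [← inter_iUnion, Metric.iUnion_closedBall_nat, inter_univ] at h

lemma tendsto_ofReal_one_div_add_one :
    Tendsto (fun n : ℕ => ENNReal.ofReal (1 / (n + 1))) atTop (𝓝 0) := by
  simpa using ENNReal.tendsto_ofReal tendsto_one_div_add_atTop_nhds_zero_nat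

lemma tendsto_indicator_rpow {α : Type*} {k : ℕ → α → ℝ≥0∞} {T : ℕ → Set α} {c : ℕ → ℝ≥0∞}
    {x : α} {K : ℝ≥0∞} {θ : ℝ} (hθ : 0 < θ) (hk : Tendsto (fun n => k n x) atTop (𝓝 K))
    (hkK : ∀ n, k n x ≤ K) (hc : Tendsto c atTop (𝓝 0))
    (hT : ∀ᶠ n in atTop, c n ≤ k n x → x ∈ T n) :
    Tendsto (fun n => (T n).indicator (fun x => k n x ^ θ) x) atTop (𝓝 (K ^ θ)) := by
  rcases eq_or_ne K 0 with rfl | hK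
  · have h₀ (n : ℕ) : (T n).indicator (fun x => k n x ^ θ) x = 0 :=
      indicator_apply_eq_zero.2 fun _ => by
        rw [le_zero_iff.1 (hkK n), ENNReal.zero_rpow_of_pos hθ]
    simp only [h₀, ENNReal.zero_rpow_of_pos hθ, tendsto_const_nhds]
  · refine ((ENNReal.continuous_rpow_const.tendsto K).comp hk).congr' ?_
    filter_upwards [hT, hc.eventually_lt hk (pos_iff_ne_zero.2 hK)] with n hn hlt
    exact (indicator_of_mem (hn hlt.le) fun x => k n x ^ θ).symm

lemma sq_mul_lintegral_measure_rpow_le (hV : 3 ≤ finrank ℝ V) (hφ : Integrable φ) {l : ℝ}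
    (hl : 0 < l) :
    ENNReal.ofReal l ^ 2 * ∫⁻ σ, volume {ξ | l < ‖chirpFourier φ σ ξ‖} ^
        ((finrank ℝ V - 2) / finrank ℝ V : ℝ) ≤
      ENNReal.ofReal (16 * π ^ (finrank ℝ V / 2 : ℝ)) * eLpNorm φ 2 volume ^ 2 := by
  have hθ : (0 : ℝ) < (finrank ℝ V - 2) / finrank ℝ V := by
    have : (3 : ℝ) ≤ finrank ℝ V := by exact_mod_cast hV
    exact div_pos (by linarith) (by linarith)
  set θ : ℝ := (finrank ℝ V - 2) / finrank ℝ V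
  set C := ENNReal.ofReal (16 * π ^ (finrank ℝ V / 2 : ℝ)) * eLpNorm φ 2 volume ^ 2
  set k : ℕ → ℝ → ℝ≥0∞ := fun n σ =>
    volume ({ξ | l < ‖chirpFourier φ σ ξ‖} ∩ Metric.closedBall 0 n)
  set T : ℕ → Set ℝ := fun n => Icc (-n) n ∩ {σ | ENNReal.ofReal (1 / (n + 1)) ≤ k n σ}
  have hlim (σ : ℝ) : Tendsto (fun n => (T n).indicator (fun σ => k n σ ^ θ) σ) atTop
      (𝓝 (volume {ξ | l < ‖chirpFourier φ σ ξ‖} ^ θ)) := by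
    refine tendsto_indicator_rpow hθ (tendsto_measure_inter_closedBall _)
      (fun n => measure_mono inter_subset_left) tendsto_ofReal_one_div_add_one ?_
    filter_upwards [eventually_ge_atTop ⌈|σ|⌉₊] with n hn hσ
    exact ⟨abs_le.1 (Nat.ceil_le.1 hn), hσ⟩
  have hk (n : ℕ) : Measurable (k n) :=
    measurable_measure_lt_norm_chirpFourier_inter hφ l measurableSet_closedBall
  have hT (n : ℕ) : MeasurableSet (T n) :=
    measurableSet_Icc.inter (measurableSet_le measurable_const (hk n))
  have hl₀ : ENNReal.ofReal l ^ 2 ≠ 0 := pow_ne_zero 2 (ENNReal.ofReal_pos.2 hl).ne'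
  have hl_top : ENNReal.ofReal l ^ 2 ≠ ∞ := ENNReal.pow_ne_top ENNReal.ofReal_ne_top
  have htrunc (n : ℕ) :
      ∫⁻ σ, (T n).indicator (fun σ => k n σ ^ θ) σ ≤ C / ENNReal.ofReal l ^ 2 := by
    rw [lintegral_indicator (hT n), ENNReal.le_div_iff_mul_le (.inl hl₀) (.inl hl_top), mul_comm]
    exact sq_mul_setLIntegral_measure_rpow_le hV hφ hl (hT n)
      (measure_ne_top_of_subset inter_subset_left (by simp)) measurableSet_closedBall
      measure_closedBall_lt_top.ne Nat.one_div_pos_of_nat fun σ hσ => hσ.2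
  rw [mul_comm, ← ENNReal.le_div_iff_mul_le (.inl hl₀) (.inl hl_top)]
  calc ∫⁻ σ, volume {ξ | l < ‖chirpFourier φ σ ξ‖} ^ θ
      = ∫⁻ σ, liminf (fun n => (T n).indicator (fun σ => k n σ ^ θ) σ) atTop :=
        lintegral_congr fun σ => (hlim σ).liminf_eq.symm
    _ ≤ liminf (fun n => ∫⁻ σ, (T n).indicator (fun σ => k n σ ^ θ) σ) atTop :=
        lintegral_liminf_le fun n => ((hk n).pow_const θ).indicator (hT n)
    _ ≤ C / ENNReal.ofReal l ^ 2 :=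
        liminf_le_of_frequently_le' (.of_forall htrunc)

end WeakStrichartz

section Interpolation

lemma lintegral_indicator_rpow_mul_sq {r c y : ℝ} (hr : 2 < r) (hc : 0 ≤ c) (hy : 0 ≤ y) :
    ∫⁻ l in Ioi 0, {l | l * y ^ (1 / (r - 1)) ≤ c}.indicator
        (fun l => ENNReal.ofReal (l ^ (r - 3)) * ENNReal.ofReal (y ^ 2)) l =
      ENNReal.ofReal (c ^ (r - 2) / (r - 2) * y ^ (r / (r - 1))) := by
  have hr₁ : r - 1 ≠ 0 := by linarith
  rcases hy.eq_or_lt with rfl | hy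
  · have : r / (r - 1) ≠ 0 := div_ne_zero (by linarith) hr₁
    simp [Real.zero_rpow this]
  have hya : 0 < y ^ (1 / (r - 1)) := Real.rpow_pos_of_pos hy _
  have hset : {l | l * y ^ (1 / (r - 1)) ≤ c} = Iic (c / y ^ (1 / (r - 1))) := by
    ext l
    exact (le_div_iff₀ hya).symm
  rw [hset, lintegral_indicator measurableSet_Iic, Measure.restrict_restrict measurableSet_Iic,
    inter_comm, Ioi_inter_Iic, lintegral_mul_const' _ _ ENNReal.ofReal_ne_top,
    show r - 3 = r - 2 - 1 by ring, lintegral_Ioc_zero_rpow (by linarith) (by positivity),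
    ← ENNReal.ofReal_mul (div_nonneg (by positivity) (by linarith)),
    Real.div_rpow hc hya.le, ← Real.rpow_mul hy.le]
  have hexp : y ^ (r / (r - 1)) * y ^ (1 / (r - 1) * (r - 2)) = y ^ 2 := by
    rw [← Real.rpow_add hy, ← Real.rpow_natCast]
    congr 1
    field_simp
    push_cast
    ring
  have := Real.rpow_pos_of_pos hy (1 / (r - 1) * (r - 2))
  rw [← hexp]
  field_simp

variable {α : Type*} [MeasurableSpace α] {μ : Measure α} {f : α → ℝ} {r : ℝ}

lemma setLIntegral_compl_setOf_mul_rpow_le (hr : 2 < r) (hf : Measurable f) (hf₀ : ∀ x, 0 ≤ f x)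
    (hfr : ∫⁻ x, ENNReal.ofReal (f x ^ (r / (r - 1))) ∂μ ≠ ∞) {l : ℝ} (hl : 0 < l) :
    ∫⁻ x in {x | l * f x ^ (1 / (r - 1)) ≤
        2 * (∫⁻ x, ENNReal.ofReal (f x ^ (r / (r - 1))) ∂μ).toReal}ᶜ, ENNReal.ofReal (f x) ∂μ ≤
      ENNReal.ofReal (l / 2) := by
  set A := ∫⁻ x, ENNReal.ofReal (f x ^ (r / (r - 1))) ∂μ
  have hr₁ : 0 < r - 1 := by linarith
  rcases eq_or_ne A 0 with hA | hA
  · have hf_ae : (fun x => ENNReal.ofReal (f x)) =ᵐ[μ] 0 := by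
      filter_upwards [(lintegral_eq_zero_iff (by fun_prop)).1 hA] with x hx
      by_contra h
      have hx_pos : 0 < f x := by simpa using h
      simpa using (ENNReal.ofReal_pos.2 (Real.rpow_pos_of_pos hx_pos (r / (r - 1)))).ne' hx
    rw [lintegral_congr_ae (ae_restrict_of_ae hf_ae)]
    simp
  set P := A.toReal
  have hP : 0 < P := ENNReal.toReal_pos hA hfr
  have hpt : ∀ x ∈ {x | l * f x ^ (1 / (r - 1)) ≤ 2 * P}ᶜ, ENNReal.ofReal (f x) ≤
      ENNReal.ofReal (l / (2 * P)) * ENNReal.ofReal (f x ^ (r / (r - 1))) := by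
    intro x hx
    have hlt : 2 * P < l * f x ^ (1 / (r - 1)) := not_le.1 hx
    rw [← ENNReal.ofReal_mul (by positivity),
      show r / (r - 1) = 1 + 1 / (r - 1) by field_simp; ring,
      Real.rpow_add_of_nonneg (hf₀ x) zero_le_one (by positivity), Real.rpow_one]
    refine ENNReal.ofReal_le_ofReal ?_
    rw [div_mul_eq_mul_div, le_div_iff₀ (by positivity)]
    linarith [mul_le_mul_of_nonneg_left hlt.le (hf₀ x)]
  calc ∫⁻ x in {x | l * f x ^ (1 / (r - 1)) ≤ 2 * P}ᶜ, ENNReal.ofReal (f x) ∂μ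
      ≤ ∫⁻ x in {x | l * f x ^ (1 / (r - 1)) ≤ 2 * P}ᶜ,
          ENNReal.ofReal (l / (2 * P)) * ENNReal.ofReal (f x ^ (r / (r - 1))) ∂μ :=
        setLIntegral_mono (by fun_prop) hpt
    _ ≤ ENNReal.ofReal (l / (2 * P)) * A := by
        rw [lintegral_const_mul' _ _ ENNReal.ofReal_ne_top]
        gcongr
        exact setLIntegral_le_lintegral _ _
    _ = ENNReal.ofReal (l / 2) := by
        rw [show A = ENNReal.ofReal P from (ENNReal.ofReal_toReal hfr).symm,
          ← ENNReal.ofReal_mul (by positivity)]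
        congr 1
        field_simp

lemma measurable_uncurry_indicator_rpow_mul_sq (hf : Measurable f) (r c : ℝ) :
    Measurable (Function.uncurry fun l : ℝ => {x | l * f x ^ (1 / (r - 1)) ≤ c}.indicator
      fun x => ENNReal.ofReal (l ^ (r - 3)) * ENNReal.ofReal (f x ^ 2)) :=
  Measurable.ite (measurableSet_le (measurable_fst.mul ((hf.comp measurable_snd).pow_const _))
    measurable_const) (by fun_prop) measurable_const

lemma lintegral_lintegral_indicator_rpow_mul_sq [SFinite μ] (hr : 2 < r) (hf : Measurable f)
    (hf₀ : ∀ x, 0 ≤ f x) {c : ℝ} (hc : 0 ≤ c) :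
    ∫⁻ l in Ioi 0, ∫⁻ x, {x | l * f x ^ (1 / (r - 1)) ≤ c}.indicator
        (fun x => ENNReal.ofReal (l ^ (r - 3)) * ENNReal.ofReal (f x ^ 2)) x ∂μ =
      ENNReal.ofReal (c ^ (r - 2) / (r - 2)) * ∫⁻ x, ENNReal.ofReal (f x ^ (r / (r - 1))) ∂μ := by
  rw [lintegral_lintegral_swap (measurable_uncurry_indicator_rpow_mul_sq hf r c).aemeasurable,
    ← lintegral_const_mul' _ _ ENNReal.ofReal_ne_top]
  refine lintegral_congr fun x => (lintegral_indicator_rpow_mul_sq hr hc (hf₀ x)).trans ?_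
  rw [ENNReal.ofReal_mul (div_nonneg (Real.rpow_nonneg hc _) (by linarith))]

/-- Marcinkiewicz interpolation between `L¹ → L^∞` and `L² → L^{2,∞}`, where `m l` plays the role
of the measure of the level set at height `l` and the first bound has been used to discard
the part of `f` on which it stays below `l / 2`. -/
lemma lintegral_rpow_mul_le_of_forall_sq_mul_le [SFinite μ] (hr : 2 < r) (hf : Measurable f)
    (hf₀ : ∀ x, 0 ≤ f x) (hfr : ∫⁻ x, ENNReal.ofReal (f x ^ (r / (r - 1))) ∂μ ≠ ∞) {K : ℝ≥0∞}
    {m : ℝ → ℝ≥0∞} (hm : ∀ l > 0, ∀ S, MeasurableSet S →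
      ∫⁻ x in Sᶜ, ENNReal.ofReal (f x) ∂μ ≤ ENNReal.ofReal (l / 2) →
      ENNReal.ofReal l ^ 2 * m l ≤ K * ∫⁻ x in S, ENNReal.ofReal (f x ^ 2) ∂μ) :
    ∫⁻ l in Ioi 0, ENNReal.ofReal (l ^ (r - 1)) * m l ≤
      K * (ENNReal.ofReal (2 ^ (r - 2) / (r - 2)) *
        (∫⁻ x, ENNReal.ofReal (f x ^ (r / (r - 1))) ∂μ) ^ (r - 1)) := by
  have hr₁ : 0 < r - 1 := by linarith
  have hr₂ : 0 < r - 2 := by linarith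
  set A := ∫⁻ x, ENNReal.ofReal (f x ^ (r / (r - 1))) ∂μ
  set P := A.toReal
  have hP : 0 ≤ P := ENNReal.toReal_nonneg
  have h2P : 0 ≤ 2 * P := by positivity
  set S : ℝ → Set α := fun l => {x | l * f x ^ (1 / (r - 1)) ≤ 2 * P}
  have hpt : ∀ l ∈ Ioi (0 : ℝ), ENNReal.ofReal (l ^ (r - 1)) * m l ≤
      K * ∫⁻ x, (S l).indicator
        (fun x => ENNReal.ofReal (l ^ (r - 3)) * ENNReal.ofReal (f x ^ 2)) x ∂μ := by
    intro l hl
    have hl : 0 < l := hl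
    have hSl : MeasurableSet (S l) :=
      measurableSet_le (measurable_const.mul (hf.pow_const _)) measurable_const
    rw [lintegral_indicator hSl, lintegral_const_mul' _ _ ENNReal.ofReal_ne_top, mul_left_comm,
      show r - 1 = r - 3 + 2 by ring, Real.rpow_add hl, ENNReal.ofReal_mul (by positivity),
      Real.rpow_two, ENNReal.ofReal_pow hl.le, mul_assoc]
    exact mul_le_mul' le_rfl
      (hm l hl _ hSl (setLIntegral_compl_setOf_mul_rpow_le hr hf hf₀ hfr hl))
  calc ∫⁻ l in Ioi 0, ENNReal.ofReal (l ^ (r - 1)) * m l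
      ≤ ∫⁻ l in Ioi 0, K * ∫⁻ x, (S l).indicator
          (fun x => ENNReal.ofReal (l ^ (r - 3)) * ENNReal.ofReal (f x ^ 2)) x ∂μ :=
        setLIntegral_mono' measurableSet_Ioi hpt
    _ = K * (ENNReal.ofReal ((2 * P) ^ (r - 2) / (r - 2)) * A) := by
        rw [lintegral_const_mul _
          (measurable_uncurry_indicator_rpow_mul_sq hf r (2 * P)).lintegral_prod_right,
          lintegral_lintegral_indicator_rpow_mul_sq hr hf hf₀ h2P]
    _ = K * (ENNReal.ofReal (2 ^ (r - 2) / (r - 2)) * A ^ (r - 1)) := by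
        rw [show A = ENNReal.ofReal P from (ENNReal.ofReal_toReal hfr).symm,
          ENNReal.ofReal_rpow_of_nonneg hP hr₁.le, ← ENNReal.ofReal_mul (by positivity),
          ← ENNReal.ofReal_mul (by positivity), Real.mul_rpow zero_le_two hP,
          show r - 1 = r - 2 + 1 by ring, Real.rpow_add_of_nonneg hP hr₂.le zero_le_one,
          Real.rpow_one]
        congr 2
        ring

end Interpolation

section LayerCake

variable {α : Type*} [MeasurableSpace α] {μ : Measure α} {r s : ℝ}

lemma ofReal_rpow_mul_rpow_le_of_antitone (hr : 0 < r) {m : ℝ → ℝ≥0∞} (hm : Antitone m)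
    (hs : 0 ≤ s) {l : ℝ} (hl : 0 < l) :
    ENNReal.ofReal (l ^ r) * m l ^ s ≤
      ENNReal.ofReal r * ∫⁻ x in Ioi 0, ENNReal.ofReal (x ^ (r - 1)) * m x ^ s := by
  calc ENNReal.ofReal (l ^ r) * m l ^ s
      = ENNReal.ofReal r * ∫⁻ x in Ioc 0 l, ENNReal.ofReal (x ^ (r - 1)) * m l ^ s := by
        rw [lintegral_mul_const _ (by fun_prop), lintegral_Ioc_zero_rpow hr hl.le, ← mul_assoc,
          ← ENNReal.ofReal_mul hr.le, mul_div_cancel₀ _ hr.ne']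
    _ ≤ ENNReal.ofReal r * ∫⁻ x in Ioc 0 l, ENNReal.ofReal (x ^ (r - 1)) * m x ^ s := by
        gcongr ENNReal.ofReal r * ?_
        refine setLIntegral_mono' measurableSet_Ioc fun x hx => ?_
        gcongr
        exact hm hx.2
    _ ≤ ENNReal.ofReal r * ∫⁻ x in Ioi 0, ENNReal.ofReal (x ^ (r - 1)) * m x ^ s := by
        gcongr ENNReal.ofReal r * ?_
        exact lintegral_mono_set Ioc_subset_Ioi_self

lemma lintegral_rpow_mul_le_of_antitone (hr : 0 < r) (hs : 1 ≤ s) {m : ℝ → ℝ≥0∞}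
    (hm : Antitone m) :
    ∫⁻ l in Ioi 0, ENNReal.ofReal (l ^ (r * s - 1)) * m l ≤ ENNReal.ofReal r ^ (s - 1) *
      (∫⁻ l in Ioi 0, ENNReal.ofReal (l ^ (r - 1)) * m l ^ (1 / s)) ^ s := by
  have : 0 < s := by linarith
  set J := ∫⁻ l in Ioi 0, ENNReal.ofReal (l ^ (r - 1)) * m l ^ (1 / s)
  have hpt : ∀ l ∈ Ioi (0 : ℝ), ENNReal.ofReal (l ^ (r * s - 1)) * m l ≤
      (ENNReal.ofReal r * J) ^ (s - 1) * (ENNReal.ofReal (l ^ (r - 1)) * m l ^ (1 / s)) := by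
    intro l hl
    have hl : 0 < l := hl
    have hml : m l ^ (1 / s * (s - 1)) * m l ^ (1 / s) = m l := by
      rw [← ENNReal.rpow_add_of_nonneg _ _ (mul_nonneg (by positivity) (by linarith))
        (by positivity), show 1 / s * (s - 1) + 1 / s = 1 by field_simp; ring, ENNReal.rpow_one]
    calc ENNReal.ofReal (l ^ (r * s - 1)) * m l
        = (ENNReal.ofReal (l ^ r) * m l ^ (1 / s)) ^ (s - 1) *
            (ENNReal.ofReal (l ^ (r - 1)) * m l ^ (1 / s)) := by
          rw [ENNReal.mul_rpow_of_nonneg _ _ (by linarith), ← ENNReal.rpow_mul, mul_mul_mul_comm,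
            hml, ENNReal.ofReal_rpow_of_nonneg (by positivity) (by linarith),
            ← ENNReal.ofReal_mul (by positivity), ← Real.rpow_mul hl.le, ← Real.rpow_add hl]
          ring_nf
      _ ≤ _ := by
          refine mul_le_mul' (ENNReal.rpow_le_rpow ?_ (by linarith)) le_rfl
          exact ofReal_rpow_mul_rpow_le_of_antitone hr hm (by positivity) hl
  calc ∫⁻ l in Ioi 0, ENNReal.ofReal (l ^ (r * s - 1)) * m l
      ≤ ∫⁻ l in Ioi 0,
          (ENNReal.ofReal r * J) ^ (s - 1) * (ENNReal.ofReal (l ^ (r - 1)) * m l ^ (1 / s)) :=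
        setLIntegral_mono' measurableSet_Ioi hpt
    _ = (ENNReal.ofReal r * J) ^ (s - 1) * J :=
        lintegral_const_mul _ ((by fun_prop : Measurable _).mul (hm.measurable.pow_const _))
    _ = ENNReal.ofReal r ^ (s - 1) * J ^ s := by
        rw [ENNReal.mul_rpow_of_nonneg _ _ (by linarith), mul_assoc]
        congr 1
        nth_rw 2 [← ENNReal.rpow_one J]
        rw [← ENNReal.rpow_add_of_nonneg _ _ (by linarith) zero_le_one, sub_add_cancel]

lemma eLpNorm_mul_rpow_le_lintegral_measure_rpow (hr : 0 < r) (hs : 1 ≤ s) {u : α → ℂ}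
    (hu : AEMeasurable u μ) :
    eLpNorm u (ENNReal.ofReal (r * s)) μ ^ r ≤ ENNReal.ofReal (r * s ^ (1 / s)) *
      ∫⁻ l in Ioi 0, ENNReal.ofReal (l ^ (r - 1)) * μ {x | l < ‖u x‖} ^ (1 / s) := by
  have hs₀ : 0 < s := by linarith
  have hrs : 0 < r * s := by positivity
  have hanti : Antitone fun l => μ {x | l < ‖u x‖} :=
    fun _ _ hl => measure_mono fun _ hx => hl.trans_lt hx
  set J := ∫⁻ l in Ioi 0, ENNReal.ofReal (l ^ (r - 1)) * μ {x | l < ‖u x‖} ^ (1 / s)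
  have hcake : ∫⁻ x, ‖u x‖ₑ ^ (r * s) ∂μ ≤
      ENNReal.ofReal (r * s) * (ENNReal.ofReal r ^ (s - 1) * J ^ s) := by
    calc ∫⁻ x, ‖u x‖ₑ ^ (r * s) ∂μ = ∫⁻ x, ENNReal.ofReal (‖u x‖ ^ (r * s)) ∂μ := by
          simp only [← ofReal_norm, ENNReal.ofReal_rpow_of_nonneg (norm_nonneg _) hrs.le]
      _ = ENNReal.ofReal (r * s) *
          ∫⁻ l in Ioi 0, ENNReal.ofReal (l ^ (r * s - 1)) * μ {x | l < ‖u x‖} := by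
          rw [lintegral_rpow_eq_lintegral_meas_lt_mul μ (.of_forall fun x => norm_nonneg (u x))
            hu.norm hrs]
          simp only [mul_comm]
      _ ≤ _ := by
          gcongr
          exact lintegral_rpow_mul_le_of_antitone hr hs hanti
  rw [eLpNorm_eq_lintegral_rpow_enorm_toReal (ENNReal.ofReal_pos.2 hrs).ne'
    ENNReal.ofReal_ne_top, ENNReal.toReal_ofReal hrs.le, ← ENNReal.rpow_mul,
    show 1 / (r * s) * r = 1 / s by field_simp]
  refine (ENNReal.rpow_le_rpow hcake (by positivity)).trans_eq ?_
  rw [← mul_assoc, ENNReal.mul_rpow_of_nonneg _ _ (by positivity), ← ENNReal.rpow_mul,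
    mul_one_div_cancel hs₀.ne', ENNReal.rpow_one, ENNReal.ofReal_rpow_of_pos hr,
    ← ENNReal.ofReal_mul hrs.le, ENNReal.ofReal_rpow_of_pos (by positivity),
    show r * s * r ^ (s - 1) = r ^ s * s by
      rw [Real.rpow_sub_one hr.ne']; field_simp,
    Real.mul_rpow (by positivity) hs₀.le, ← Real.rpow_mul hr.le, mul_one_div_cancel hs₀.ne',
    Real.rpow_one]

end LayerCake

section StrongStrichartz

variable {V : Type*} [NormedAddCommGroup V] [InnerProductSpace ℝ V] [FiniteDimensional ℝ V]
  [MeasurableSpace V] [BorelSpace V] {φ : V → ℂ} {r s : ℝ}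

lemma setOf_lt_norm_chirpFourier_subset (hφ : Integrable φ) {S : Set V} (hS : MeasurableSet S)
    {l : ℝ} (hl : 0 ≤ l) (hφS : ∫⁻ y in Sᶜ, ‖φ y‖ₑ ≤ ENNReal.ofReal (l / 2)) (σ : ℝ) :
    {ξ | l < ‖chirpFourier φ σ ξ‖} ⊆ {ξ | l / 2 < ‖chirpFourier (S.indicator φ) σ ξ‖} := by
  intro ξ hξ
  have hsplit := chirpFourier_add (hφ.indicator hS) (hφ.indicator hS.compl) σ ξ
  rw [show (fun y => S.indicator φ y + Sᶜ.indicator φ y) = φ from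
    indicator_self_add_compl S φ] at hsplit
  have hrest : ‖chirpFourier (Sᶜ.indicator φ) σ ξ‖ ≤ l / 2 := by
    rw [← ENNReal.ofReal_le_ofReal_iff (by positivity), ofReal_norm]
    refine (enorm_chirpFourier_le _ σ ξ).trans (le_of_eq_of_le ?_ hφS)
    rw [← lintegral_indicator hS.compl]
    simp only [enorm_indicator_eq_indicator_enorm]
  have htri := norm_add_le (chirpFourier (S.indicator φ) σ ξ) (chirpFourier (Sᶜ.indicator φ) σ ξ)
  rw [← hsplit] at htri
  have hlt : l < ‖chirpFourier φ σ ξ‖ := hξ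
  change l / 2 < _
  linarith

lemma measurable_measure_lt_norm_chirpFourier (hφ : Integrable φ) :
    Measurable fun q : ℝ × ℝ => volume {ξ | q.2 < ‖chirpFourier φ q.1 ξ‖} := by
  refine measurable_measure_prodMk_left (s := {q : (ℝ × ℝ) × V | q.1.2 <
    ‖chirpFourier φ q.1.1 q.2‖}) (measurableSet_lt (by fun_prop) ?_)
  exact ((continuous_uncurry_chirpFourier hφ).measurable.comp
    (by fun_prop : Measurable fun q : (ℝ × ℝ) × V => (q.1.1, q.2))).norm

variable {ν : Measure ℝ} {K : ℝ≥0∞}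

lemma sq_mul_lintegral_measure_rpow_le_of_setLIntegral_compl_le (hs : 0 ≤ s)
    (hK : ∀ ψ : V → ℂ, Integrable ψ → ∀ l > 0, ENNReal.ofReal l ^ 2 *
      ∫⁻ σ, volume {ξ | l < ‖chirpFourier ψ σ ξ‖} ^ s ∂ν ≤ K * eLpNorm ψ 2 volume ^ 2)
    (hφ : Integrable φ) {l : ℝ} (hl : 0 < l) {S : Set V} (hS : MeasurableSet S)
    (hφS : ∫⁻ y in Sᶜ, ENNReal.ofReal ‖φ y‖ ≤ ENNReal.ofReal (l / 2)) :
    ENNReal.ofReal l ^ 2 * ∫⁻ σ, volume {ξ | l < ‖chirpFourier φ σ ξ‖} ^ s ∂ν ≤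
      4 * K * ∫⁻ y in S, ENNReal.ofReal (‖φ y‖ ^ 2) := by
  simp only [ofReal_norm] at hφS
  calc ENNReal.ofReal l ^ 2 * ∫⁻ σ, volume {ξ | l < ‖chirpFourier φ σ ξ‖} ^ s ∂ν
      ≤ 4 * (ENNReal.ofReal (l / 2) ^ 2 * ∫⁻ σ,
          volume {ξ | l / 2 < ‖chirpFourier (S.indicator φ) σ ξ‖} ^ s ∂ν) := by
        rw [← mul_assoc, ← ENNReal.ofReal_pow hl.le, ← ENNReal.ofReal_pow (half_pos hl).le,
          show (4 : ℝ≥0∞) = ENNReal.ofReal 4 by simp, ← ENNReal.ofReal_mul (by norm_num),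
          show 4 * (l / 2) ^ 2 = l ^ 2 by ring]
        exact mul_le_mul' le_rfl (lintegral_mono fun σ => ENNReal.rpow_le_rpow
          (measure_mono (setOf_lt_norm_chirpFourier_subset hφ hS hl.le hφS σ)) hs)
    _ ≤ 4 * (K * eLpNorm (S.indicator φ) 2 volume ^ 2) :=
        mul_le_mul' le_rfl (hK _ (hφ.indicator hS) _ (half_pos hl))
    _ = 4 * K * ∫⁻ y in S, ENNReal.ofReal (‖φ y‖ ^ 2) := by
        rw [eLpNorm_two_sq, mul_assoc, ← lintegral_indicator hS]
        congr 3 with y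
        by_cases hy : y ∈ S <;> simp [hy, ENNReal.ofReal_pow]

lemma lintegral_eLpNorm_chirpFourier_rpow_le [SFinite ν] (hs : 1 ≤ s)
    (hK : ∀ ψ : V → ℂ, Integrable ψ → ∀ l > 0, ENNReal.ofReal l ^ 2 *
      ∫⁻ σ, volume {ξ | l < ‖chirpFourier ψ σ ξ‖} ^ (1 / s) ∂ν ≤ K * eLpNorm ψ 2 volume ^ 2)
    (hr : 2 < r) (hφ : Measurable φ) (hφ₁ : Integrable φ)
    (hφr : eLpNorm φ (ENNReal.ofReal (r / (r - 1))) volume ≠ ∞) :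
    ∫⁻ σ, eLpNorm (chirpFourier φ σ) (ENNReal.ofReal (r * s)) volume ^ r ∂ν ≤
      ENNReal.ofReal (r * s ^ (1 / s)) * (4 * K * (ENNReal.ofReal (2 ^ (r - 2) / (r - 2)) *
        eLpNorm φ (ENNReal.ofReal (r / (r - 1))) volume ^ r)) := by
  have hr' : 0 < r / (r - 1) := div_pos (by linarith) (by linarith)
  have henorm : ∫⁻ y, ENNReal.ofReal (‖φ y‖ ^ (r / (r - 1))) = ∫⁻ y, ‖φ y‖ₑ ^ (r / (r - 1)) := by
    simp only [← ofReal_norm, ENNReal.ofReal_rpow_of_nonneg (norm_nonneg _) hr'.le]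
  have hnorm := eLpNorm_eq_lintegral_rpow_enorm_toReal (f := φ) (μ := volume)
    (ENNReal.ofReal_pos.2 hr').ne' ENNReal.ofReal_ne_top
  rw [ENNReal.toReal_ofReal hr'.le, ← henorm] at hnorm
  have hfr : ∫⁻ y, ENNReal.ofReal (‖φ y‖ ^ (r / (r - 1))) ≠ ∞ := fun h => hφr <| by
    rw [hnorm, h, ENNReal.top_rpow_of_pos (by positivity)]
  have hmeas : Measurable (Function.uncurry fun σ l =>
      ENNReal.ofReal (l ^ (r - 1)) * volume {ξ | l < ‖chirpFourier φ σ ξ‖} ^ (1 / s)) :=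
    (by fun_prop : Measurable fun q : ℝ × ℝ => ENNReal.ofReal (q.2 ^ (r - 1))).mul
      ((measurable_measure_lt_norm_chirpFourier hφ₁).pow_const _)
  calc ∫⁻ σ, eLpNorm (chirpFourier φ σ) (ENNReal.ofReal (r * s)) volume ^ r ∂ν
      ≤ ∫⁻ σ, ENNReal.ofReal (r * s ^ (1 / s)) * (∫⁻ l in Ioi 0, ENNReal.ofReal (l ^ (r - 1)) *
          volume {ξ | l < ‖chirpFourier φ σ ξ‖} ^ (1 / s)) ∂ν :=
        lintegral_mono fun σ => eLpNorm_mul_rpow_le_lintegral_measure_rpow (by linarith) hs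
          ((continuous_uncurry_chirpFourier hφ₁).comp
            (Continuous.prodMk_right σ)).measurable.aemeasurable
    _ = ENNReal.ofReal (r * s ^ (1 / s)) * ∫⁻ l in Ioi 0, ENNReal.ofReal (l ^ (r - 1)) *
          ∫⁻ σ, volume {ξ | l < ‖chirpFourier φ σ ξ‖} ^ (1 / s) ∂ν := by
        rw [lintegral_const_mul' _ _ ENNReal.ofReal_ne_top,
          lintegral_lintegral_swap hmeas.aemeasurable]
        simp only [lintegral_const_mul' _ _ ENNReal.ofReal_ne_top]
    _ ≤ _ := by
        gcongr
        refine (lintegral_rpow_mul_le_of_forall_sq_mul_le hr hφ.norm (fun y => norm_nonneg _) hfr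
          fun l hl S hS hφS => sq_mul_lintegral_measure_rpow_le_of_setLIntegral_compl_le
            (by positivity) hK hφ₁ hl hS hφS).trans_eq ?_
        rw [hnorm, ← ENNReal.rpow_mul, show 1 / (r / (r - 1)) * r = r - 1 by
          have : r ≠ 0 := by linarith
          field_simp]

lemma sq_mul_measure_lt_norm_chirpFourier_le (hφ : Integrable φ) (l : ℝ) (σ : ℝ) :
    ENNReal.ofReal l ^ 2 * volume {ξ | l < ‖chirpFourier φ σ ξ‖} ≤ eLpNorm φ 2 volume ^ 2 := by
  by_cases hφ₂ : MemLp φ 2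
  · have h := mul_meas_ge_le_pow_eLpNorm' volume two_ne_zero ENNReal.ofNat_ne_top
      ((continuous_uncurry_chirpFourier hφ).comp (Continuous.prodMk_right σ)).aestronglyMeasurable
      (ENNReal.ofReal l)
    rw [ENNReal.toReal_ofNat, ENNReal.rpow_ofNat, ENNReal.rpow_ofNat] at h
    rw [← eLpNorm_chirpFourier hφ hφ₂ σ]
    refine le_trans (mul_le_mul' le_rfl (measure_mono fun ξ hξ => ?_)) h
    exact (ENNReal.ofReal_le_ofReal (le_of_lt hξ)).trans_eq (ofReal_norm _)
  · have : eLpNorm φ 2 volume = ∞ := by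
      by_contra h
      exact hφ₂ ⟨hφ.1, lt_top_iff_ne_top.2 h⟩
    simp [this]

lemma exists_lintegral_eLpNorm_chirpFourier_rpow_le (V : Type*) [NormedAddCommGroup V]
    [InnerProductSpace ℝ V] [FiniteDimensional ℝ V] [MeasurableSpace V] [BorelSpace V]
    (hV : 3 ≤ finrank ℝ V) (hr : 2 < r) :
    ∃ C : ℝ≥0, ∀ φ : V → ℂ, Measurable φ → (∀ p, MemLp φ p) →
      ∫⁻ σ, eLpNorm (chirpFourier φ σ)
        (ENNReal.ofReal (r * (finrank ℝ V / (finrank ℝ V - 2)))) volume ^ r ≤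
      C * eLpNorm φ (ENNReal.ofReal (r / (r - 1))) volume ^ r := by
  have hD : (3 : ℝ) ≤ finrank ℝ V := by exact_mod_cast hV
  have hs : 1 ≤ (finrank ℝ V / (finrank ℝ V - 2) : ℝ) := by
    rw [one_le_div (by linarith)]
    linarith
  set D : ℝ := (finrank ℝ V : ℝ)
  refine ⟨Real.toNNReal (r * (D / (D - 2)) ^ (1 / (D / (D - 2)))) *
    (4 * Real.toNNReal (16 * π ^ (D / 2)) * Real.toNNReal (2 ^ (r - 2) / (r - 2))),
    fun φ hφ hφp => ?_⟩
  refine (lintegral_eLpNorm_chirpFourier_rpow_le (K := ENNReal.ofReal (16 * π ^ (D / 2))) hs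
    (fun ψ hψ l hl => ?_) hr hφ (memLp_one_iff_integrable.1 (hφp 1)) (hφp _).2.ne).trans_eq ?_
  · rw [one_div_div]
    exact sq_mul_lintegral_measure_rpow_le hV hψ hl
  · push_cast
    simp only [ENNReal.ofReal, mul_assoc]

lemma exists_eLpNorm_chirpFourier_rpow_le (hr : 2 < r) :
    ∃ C : ℝ≥0, ∀ φ : V → ℂ, Measurable φ → (∀ p, MemLp φ p) → ∀ σ,
      eLpNorm (chirpFourier φ σ) (ENNReal.ofReal r) volume ^ r ≤
      C * eLpNorm φ (ENNReal.ofReal (r / (r - 1))) volume ^ r := by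
  refine ⟨Real.toNNReal r * (4 * Real.toNNReal (2 ^ (r - 2) / (r - 2))), fun φ hφ hφp σ => ?_⟩
  have h := lintegral_eLpNorm_chirpFourier_rpow_le (ν := Measure.dirac σ) (K := 1) le_rfl
    (fun ψ hψ l _ => ?_) hr hφ (memLp_one_iff_integrable.1 (hφp 1)) (hφp _).2.ne
  · rw [lintegral_dirac] at h
    refine le_of_eq_of_le (by rw [mul_one]) (h.trans_eq ?_)
    push_cast
    simp only [ENNReal.ofReal, mul_assoc, Real.one_rpow, mul_one]
  · rw [lintegral_dirac, one_div_one, ENNReal.rpow_one, one_mul]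
    exact sq_mul_measure_lt_norm_chirpFourier_le hψ l σ

end StrongStrichartz

section Scaling

variable {V : Type*} [NormedAddCommGroup V] [InnerProductSpace ℝ V] [FiniteDimensional ℝ V]
  [MeasurableSpace V] [BorelSpace V]

lemma eLpNorm_comp_smul {c q : ℝ} (hc : c ≠ 0) (hq : 0 ≤ q) (f : V → ℂ) :
    eLpNorm (fun x => f (c • x)) (ENNReal.ofReal q) volume =
      ENNReal.ofReal (|c| ^ (-(finrank ℝ V / q : ℝ))) * eLpNorm f (ENNReal.ofReal q) volume := by
  have hemb : MeasurableEmbedding fun x : V => c • x :=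
    (Homeomorph.smulOfNeZero c hc).measurableEmbedding
  have hpow : 0 < |(c ^ finrank ℝ V)⁻¹| := by positivity
  change eLpNorm (f ∘ fun x => c • x) _ volume = _
  rw [← hemb.eLpNorm_map_measure, Measure.map_addHaar_smul _ hc,
    eLpNorm_smul_measure_of_ne_zero (ENNReal.ofReal_pos.2 hpow).ne', smul_eq_mul,
    ENNReal.ofReal_rpow_of_pos hpow, abs_inv, abs_pow, ← Real.rpow_natCast,
    ← Real.rpow_neg (abs_nonneg c), ← Real.rpow_mul (abs_nonneg c), one_div, ENNReal.toReal_inv,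
    ENNReal.toReal_ofReal hq, neg_mul, div_eq_mul_inv]

lemma lintegral_inv_sq_mul_comp_inv {c : ℝ} (hc : c ≠ 0) (h : ℝ → ℝ≥0∞) :
    ∫⁻ x, ENNReal.ofReal (x ^ 2)⁻¹ * h (c * x)⁻¹ = ENNReal.ofReal |c| * ∫⁻ x, h x := by
  have himage : (fun x : ℝ => (c * x)⁻¹) '' {0}ᶜ = {0}ᶜ := by
    ext y
    refine ⟨?_, fun hy => ⟨(c * y)⁻¹, ?_, ?_⟩⟩
    · rintro ⟨x, hx, rfl⟩
      exact inv_ne_zero (mul_ne_zero hc hx)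
    · exact inv_ne_zero (mul_ne_zero hc hy)
    · field_simp
  have hderiv : ∀ x ∈ ({0}ᶜ : Set ℝ),
      HasDerivWithinAt (fun x => (c * x)⁻¹) (-(c * 1) / (c * x) ^ 2) {0}ᶜ x := fun x hx =>
    (((hasDerivAt_id x).const_mul c).fun_inv (mul_ne_zero hc hx)).hasDerivWithinAt
  have hinj : InjOn (fun x : ℝ => (c * x)⁻¹) {0}ᶜ := fun x _ y _ hxy =>
    mul_left_cancel₀ hc (inv_injective hxy)
  have hcov := lintegral_image_eq_lintegral_abs_deriv_mul (measurableSet_singleton 0).compl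
    hderiv hinj h
  have hae : ({0}ᶜ : Set ℝ) =ᵐ[volume] univ := by simp
  rw [himage, setLIntegral_congr hae, setLIntegral_congr hae, setLIntegral_univ,
    setLIntegral_univ] at hcov
  rw [hcov, ← lintegral_const_mul' _ _ ENNReal.ofReal_ne_top]
  refine lintegral_congr fun x => ?_
  rw [← mul_assoc, ← ENNReal.ofReal_mul (abs_nonneg c), mul_one, abs_div, abs_neg,
    abs_of_nonneg (sq_nonneg (c * x)), mul_pow, ← sq_abs c]
  congr 2
  have : |c| ≠ 0 := abs_ne_zero.2 hc
  field_simp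

end Scaling

section Schrodinger

variable {V : Type*} [NormedAddCommGroup V] [InnerProductSpace ℝ V] [FiniteDimensional ℝ V]
  [MeasurableSpace V] [BorelSpace V] {f φ : V → ℂ} {τ : ℝ}

lemma schrod_of_ne_zero (d : ℕ) (hτ : τ ≠ 0) (f : V → ℂ) (x : V) :
    schrod d τ f x = (4 * (π : ℂ) * Complex.I * τ) ^ (-(d : ℂ) / 2) *
      ∫ y, chirp (4 * τ)⁻¹ (x - y) * f y := by
  simp only [schrod, if_neg hτ, chirp]
  congr 3 with y
  congr 2
  push_cast
  ring

lemma integrable_chirp_sub_mul_iff (σ : ℝ) (x : V) :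
    Integrable (fun y => chirp σ (x - y) * f y) ↔ Integrable f := by
  have hcont : Continuous fun y : V => chirp σ (x - y) := (continuous_chirp σ).comp (by fun_prop)
  have hne (y : V) : chirp σ (x - y) ≠ 0 := Complex.exp_ne_zero _
  refine ⟨fun h => ?_, fun h => h.bdd_mul hcont.aestronglyMeasurable
    (.of_forall fun y => (norm_chirp σ (x - y)).le)⟩
  refine (h.bdd_mul (c := 1) (hcont.inv₀ hne).aestronglyMeasurable (.of_forall fun y => ?_)).congr
    (.of_forall fun y => inv_mul_cancel_left₀ (hne y) (f y))
  rw [Pi.inv_apply, norm_inv, norm_chirp, inv_one]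

lemma schrod_of_not_integrable (d : ℕ) (hτ : τ ≠ 0) (hf : ¬ Integrable f) :
    schrod d τ f = 0 := by
  ext x
  rw [schrod_of_ne_zero d hτ, integral_undef (by rwa [integrable_chirp_sub_mul_iff]), mul_zero,
    Pi.zero_apply]

lemma continuous_schrod (d : ℕ) (hτ : τ ≠ 0) (f : V → ℂ) : Continuous (schrod d τ f) := by
  by_cases hf : Integrable f
  · rw [funext (schrod_of_ne_zero d hτ f)]
    refine continuous_const.mul (continuous_of_dominated (bound := fun y => ‖f y‖) (fun x => ?_)
      (fun x => .of_forall fun y => ?_) hf.norm (.of_forall fun y => ?_))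
    · exact ((integrable_chirp_sub_mul_iff _ x).2 hf).1
    · rw [norm_mul, norm_chirp, one_mul]
    · exact ((continuous_chirp _).comp (by fun_prop)).mul continuous_const
  · rw [schrod_of_not_integrable d hτ hf]
    exact continuous_zero

lemma integral_mul_schrod_comm (d : ℕ) (hφ : Integrable φ) (hf : Integrable f) (τ : ℝ) :
    ∫ x, φ x * schrod d τ f x = ∫ x, schrod d τ φ x * f x := by
  rcases eq_or_ne τ 0 with rfl | hτ
  · simp only [schrod, if_true]
  set c : ℂ := (4 * (π : ℂ) * Complex.I * τ) ^ (-(d : ℂ) / 2)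
  have hint : Integrable (fun p : V × V => chirp (4 * τ)⁻¹ (p.1 - p.2) * (φ p.1 * f p.2))
      (volume.prod volume) :=
    (hφ.mul_prod hf).bdd_mul ((continuous_chirp _).comp (by fun_prop)).aestronglyMeasurable
      (.of_forall fun p => (norm_chirp _ (p.1 - p.2)).le)
  have hsymm (x y : V) : chirp (4 * τ)⁻¹ (x - y) = chirp (4 * τ)⁻¹ (y - x) := by
    rw [chirp, chirp, norm_sub_rev]
  calc ∫ x, φ x * schrod d τ f x
      = c * ∫ x, ∫ y, chirp (4 * τ)⁻¹ (x - y) * (φ x * f y) := by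
        rw [← integral_const_mul]
        refine integral_congr_ae (.of_forall fun x => ?_)
        simp only [schrod_of_ne_zero d hτ, ← integral_const_mul]
        congr 1 with y
        ring
    _ = c * ∫ y, ∫ x, chirp (4 * τ)⁻¹ (x - y) * (φ x * f y) := by
        rw [integral_integral_swap hint]
    _ = ∫ y, schrod d τ φ y * f y := by
        rw [← integral_const_mul]
        refine integral_congr_ae (.of_forall fun y => ?_)
        simp only [schrod_of_ne_zero d hτ, ← integral_const_mul, ← integral_mul_const]
        congr 1 with x
        rw [hsymm]
        ring

lemma enorm_schrod (d : ℕ) (hτ : τ ≠ 0) (φ : V → ℂ) (x : V) :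
    ‖schrod d τ φ x‖ₑ = ENNReal.ofReal ((4 * π * |τ|) ^ (-(d / 2) : ℝ)) *
      ‖chirpFourier φ (4 * τ)⁻¹ ((4 * π * τ)⁻¹ • x)‖ₑ := by
  have hconst : ‖(4 * (π : ℂ) * Complex.I * τ) ^ (-(d : ℂ) / 2)‖ₑ =
      ENNReal.ofReal ((4 * π * |τ|) ^ (-(d / 2) : ℝ)) := by
    rw [show -(d : ℂ) / 2 = ((-(d / 2) : ℝ) : ℂ) by push_cast; ring, ← ofReal_norm,
      Complex.norm_cpow_real]
    simp [abs_of_pos Real.pi_pos]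
  have hint : ∫ y, chirp (4 * τ)⁻¹ (x - y) * φ y =
      chirp (4 * τ)⁻¹ x * chirpFourier φ (4 * τ)⁻¹ ((4 * π * τ)⁻¹ • x) := by
    rw [show (4 * π * τ)⁻¹ = (4 * τ)⁻¹ / π by field_simp, chirpFourier, Real.fourier_eq',
      ← integral_const_mul]
    refine integral_congr_ae (.of_forall fun y => ?_)
    simp only [chirp_sub, smul_eq_mul]
    ring
  rw [schrod_of_ne_zero d hτ, enorm_mul, hconst, hint, enorm_mul, enorm_chirp, one_mul]

lemma eLpNorm_schrod (hτ : τ ≠ 0) {q : ℝ} (hq : 0 ≤ q) (φ : V → ℂ) :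
    eLpNorm (schrod (finrank ℝ V) τ φ) (ENNReal.ofReal q) volume =
      ENNReal.ofReal ((4 * π * |τ|) ^ (-(finrank ℝ V * (1 / 2 - 1 / q)) : ℝ)) *
        eLpNorm (chirpFourier φ (4 * τ)⁻¹) (ENNReal.ofReal q) volume := by
  have hc : 0 < 4 * π * |τ| := by positivity
  have habs : |(4 * π * τ)⁻¹| = (4 * π * |τ|)⁻¹ := by
    rw [abs_inv, abs_mul, abs_of_pos (by positivity : 0 < 4 * π)]
  rw [eLpNorm_congr_enorm_ae (g := fun x => ((4 * π * |τ|) ^ (-(finrank ℝ V / 2) : ℝ) : ℝ) •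
      chirpFourier φ (4 * τ)⁻¹ ((4 * π * τ)⁻¹ • x)) (.of_forall fun x => ?_)]
  · change eLpNorm (((4 * π * |τ|) ^ (-(finrank ℝ V / 2) : ℝ) : ℝ) •
      fun x => chirpFourier φ (4 * τ)⁻¹ ((4 * π * τ)⁻¹ • x)) _ _ = _
    rw [eLpNorm_const_smul, eLpNorm_comp_smul (by positivity) hq, habs, ← mul_assoc,
      Real.enorm_eq_ofReal (by positivity), ← ENNReal.ofReal_mul (by positivity),
      Real.inv_rpow hc.le, ← Real.rpow_neg hc.le, ← Real.rpow_add hc]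
    ring_nf
  · rw [enorm_schrod _ hτ, enorm_smul, Real.enorm_eq_ofReal (by positivity)]

end Schrodinger

section Duality

variable {α β : Type*} {r : ℝ} {u φ : α → ℂ} {H : α → β → ℂ}

/-- The function `|u|^{r-2} ū`, which up to normalisation is the element of `L^{r/(r-1)}` dual to
`u ∈ L^r`. -/
def dualPower (r : ℝ) (u : α → ℂ) (x : α) : ℂ := ((‖u x‖ ^ (r - 2) : ℝ) : ℂ) * conj (u x)

lemma dualPower_mul (hr : 1 < r) (u : α → ℂ) (x : α) :
    dualPower r u x * u x = ((‖u x‖ ^ r : ℝ) : ℂ) := by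
  rw [dualPower, mul_assoc, Complex.conj_mul', ← Complex.ofReal_pow, ← Complex.ofReal_mul,
    ← Real.rpow_natCast, ← Real.rpow_add' (norm_nonneg _) (by push_cast; linarith)]
  norm_num

lemma norm_dualPower (hr : 1 < r) (u : α → ℂ) (x : α) : ‖dualPower r u x‖ = ‖u x‖ ^ (r - 1) := by
  rcases eq_or_ne (u x) 0 with h | h
  · simp [dualPower, h, Real.zero_rpow (sub_pos.2 hr).ne']
  · rw [dualPower, norm_mul, Complex.norm_conj, Complex.norm_real,
      Real.norm_of_nonneg (by positivity), ← Real.rpow_add_one (norm_ne_zero_iff.2 h)]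
    ring_nf

lemma dualPower_indicator (r : ℝ) (E : Set α) (u : α → ℂ) :
    dualPower r (E.indicator u) = E.indicator (dualPower r u) := by
  ext x
  by_cases hx : x ∈ E <;> simp [dualPower, hx]

variable [MeasurableSpace α] [MeasurableSpace β] {μ : Measure α} {ν : Measure β}

lemma measurable_dualPower (r : ℝ) (hu : Measurable u) : Measurable (dualPower r u) :=
  (Complex.measurable_ofReal.comp (hu.norm.pow_const _)).mul
    (Complex.continuous_conj.measurable.comp hu)

lemma eLpNorm_dualPower (hr : 1 < r) (u : α → ℂ) :
    eLpNorm (dualPower r u) (ENNReal.ofReal (r / (r - 1))) μ =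
      eLpNorm u (ENNReal.ofReal r) μ ^ (r - 1) := by
  have hr' : 0 < r - 1 := sub_pos.2 hr
  rw [← eLpNorm_norm, funext (norm_dualPower hr u), eLpNorm_norm_rpow _ hr',
    ← ENNReal.ofReal_mul (by positivity), div_mul_cancel₀ _ hr'.ne']

lemma enorm_integral_dualPower_mul (hr : 1 < r) (hu : MemLp u (ENNReal.ofReal r) μ) :
    ‖∫ x, dualPower r u x * u x ∂μ‖ₑ = eLpNorm u (ENNReal.ofReal r) μ ^ r := by
  have hr₀ : 0 < r := by linarith
  have hint : Integrable (fun x => ‖u x‖ ^ r) μ := by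
    simpa [ENNReal.toReal_ofReal hr₀.le] using
      hu.integrable_norm_rpow (ENNReal.ofReal_pos.2 hr₀).ne' ENNReal.ofReal_ne_top
  simp only [dualPower_mul hr]
  rw [integral_complex_ofReal, ← ofReal_norm, Complex.norm_real,
    Real.norm_of_nonneg (by positivity), ofReal_integral_eq_lintegral_ofReal hint
      (.of_forall fun x => by positivity), eLpNorm_eq_lintegral_rpow_enorm_toReal
      (ENNReal.ofReal_pos.2 hr₀).ne' ENNReal.ofReal_ne_top, ENNReal.toReal_ofReal hr₀.le,
    ← ENNReal.rpow_mul, one_div_mul_cancel hr₀.ne', ENNReal.rpow_one]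
  refine lintegral_congr fun x => ?_
  rw [← ofReal_norm, ENNReal.ofReal_rpow_of_nonneg (norm_nonneg _) hr₀.le]

lemma memLp_indicator_of_bound {E : Set α} (hE : MeasurableSet E) (hμE : μ E < ∞)
    (hu : AEStronglyMeasurable u μ) {C : ℝ} (hC : ∀ x ∈ E, ‖u x‖ ≤ C) (p : ℝ≥0∞) :
    MemLp (E.indicator u) p μ := by
  have : Fact (μ E < ∞) := ⟨hμE⟩
  exact (memLp_indicator_iff_restrict hE).2
    (MemLp.of_bound hu.restrict C (ae_restrict_of_forall_mem hE hC))

lemma enorm_integral_mul_integral_le [SFinite μ] [SFinite ν]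
    (hH : Measurable (Function.uncurry H)) (hφ : Integrable φ μ) {C : ℝ≥0∞} (hC : C ≠ ∞)
    (hHC : ∀ x, φ x ≠ 0 → ∫⁻ s, ‖H x s‖ₑ ∂ν ≤ C) :
    ‖∫ x, φ x * ∫ s, H x s ∂ν ∂μ‖ₑ ≤ ∫⁻ s, ‖∫ x, φ x * H x s ∂μ‖ₑ ∂ν := by
  have hmeas : AEStronglyMeasurable (fun p : α × β => φ p.1 * H p.1 p.2) (μ.prod ν) :=
    hφ.1.comp_fst.mul hH.aestronglyMeasurable
  have hint : Integrable (fun p : α × β => φ p.1 * H p.1 p.2) (μ.prod ν) := by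
    refine ⟨hmeas, ?_⟩
    rw [hasFiniteIntegral_iff_enorm, lintegral_prod _ hmeas.enorm]
    calc ∫⁻ x, ∫⁻ s, ‖φ x * H x s‖ₑ ∂ν ∂μ ≤ ∫⁻ x, ‖φ x‖ₑ * C ∂μ := by
          refine lintegral_mono fun x => ?_
          simp only [enorm_mul]
          rw [lintegral_const_mul' _ _ enorm_ne_top]
          by_cases hx : φ x = 0
          · simp [hx]
          · exact mul_le_mul' le_rfl (hHC x hx)
      _ < ∞ := by
          rw [lintegral_mul_const' _ _ hC]
          exact ENNReal.mul_lt_top hφ.2 hC.lt_top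
  calc ‖∫ x, φ x * ∫ s, H x s ∂ν ∂μ‖ₑ = ‖∫ s, ∫ x, φ x * H x s ∂μ ∂ν‖ₑ := by
        simp only [← integral_const_mul]
        rw [integral_integral_swap hint]
    _ ≤ ∫⁻ s, ‖∫ x, φ x * H x s ∂μ‖ₑ ∂ν := enorm_integral_le_lintegral_enorm _

lemma le_of_rpow_le_mul_rpow_sub_one {N A : ℝ≥0∞} (hN : N ≠ ∞)
    (h : N ^ r ≤ A * N ^ (r - 1)) : N ≤ A := by
  rcases eq_or_ne N 0 with rfl | h₀
  · exact zero_le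
  have hpow : N * N ^ (r - 1) = N ^ r := by
    conv_lhs => rw [← ENNReal.rpow_one N, ← ENNReal.rpow_mul, one_mul]
    rw [← ENNReal.rpow_add _ _ h₀ hN, add_sub_cancel]
  rw [← hpow] at h
  exact (ENNReal.mul_le_mul_iff_left (by simp [h₀, hN]) (by simp [h₀, hN])).1 h

lemma eLpNorm_indicator_integral_le [SFinite μ] [SFinite ν] (hr : 1 < r)
    (hH : Measurable (Function.uncurry H)) {E : Set α} (hE : MeasurableSet E) (hμE : μ E < ∞)
    {M : ℝ≥0} (hM : ∀ x ∈ E, ∫⁻ s, ‖H x s‖ₑ ∂ν ≤ M) {A : ℝ≥0∞}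
    (hA : ∀ φ : α → ℂ, Measurable φ → (∀ p, MemLp φ p μ) →
      (∀ x, ∫ s, H x s ∂ν = 0 → φ x = 0) →
      ∫⁻ s, ‖∫ x, φ x * H x s ∂μ‖ₑ ∂ν ≤ A * eLpNorm φ (ENNReal.ofReal (r / (r - 1))) μ) :
    eLpNorm (E.indicator fun x => ∫ s, H x s ∂ν) (ENNReal.ofReal r) μ ≤ A := by
  set u : α → ℂ := fun x => ∫ s, H x s ∂ν with hu_def
  have hu : Measurable u := hH.stronglyMeasurable.integral_prod_right.measurable
  have hbound : ∀ x ∈ E, ‖u x‖ ≤ M := fun x hx => by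
    rw [← coe_nnnorm, NNReal.coe_le_coe, ← ENNReal.coe_le_coe]
    exact (enorm_integral_le_lintegral_enorm fun s => H x s).trans (hM x hx)
  have hmem := memLp_indicator_of_bound hE hμE hu.aestronglyMeasurable hbound (ENNReal.ofReal r)
  have hdual (p : ℝ≥0∞) : MemLp (E.indicator (dualPower r u)) p μ := by
    refine memLp_indicator_of_bound hE hμE (measurable_dualPower r hu).aestronglyMeasurable
      (C := M ^ (r - 1)) (fun x hx => ?_) p
    rw [norm_dualPower hr]
    exact Real.rpow_le_rpow (norm_nonneg _) (hbound x hx) (by linarith)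
  refine le_of_rpow_le_mul_rpow_sub_one (r := r) hmem.2.ne ?_
  rw [← enorm_integral_dualPower_mul hr hmem, ← eLpNorm_dualPower hr, dualPower_indicator]
  calc ‖∫ x, E.indicator (dualPower r u) x * E.indicator u x ∂μ‖ₑ
      = ‖∫ x, E.indicator (dualPower r u) x * u x ∂μ‖ₑ := by
        congr 2 with x
        by_cases hx : x ∈ E <;> simp [hx]
    _ ≤ ∫⁻ s, ‖∫ x, E.indicator (dualPower r u) x * H x s ∂μ‖ₑ ∂ν :=
        enorm_integral_mul_integral_le hH (memLp_one_iff_integrable.1 (hdual 1))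
          ENNReal.coe_ne_top fun x hx => hM x (mem_of_indicator_ne_zero hx)
    _ ≤ A * eLpNorm (E.indicator (dualPower r u)) (ENNReal.ofReal (r / (r - 1))) μ :=
        hA _ ((measurable_dualPower r hu).indicator hE) hdual fun x hx => by
          simp [dualPower, hu_def, hx]

/-- The sets `{∫ ‖H x s‖ ∂ν ≤ n}` on which one truncates miss only points where `∫ H x s ∂ν` is `0`
by convention. -/
lemma eLpNorm_integral_le_of_forall_lintegral_enorm_integral_mul_le [SigmaFinite μ] [SFinite ν]
    (hr : 1 < r) (hH : Measurable (Function.uncurry H)) {A : ℝ≥0∞}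
    (hA : ∀ φ : α → ℂ, Measurable φ → (∀ p, MemLp φ p μ) →
      (∀ x, ∫ s, H x s ∂ν = 0 → φ x = 0) →
      ∫⁻ s, ‖∫ x, φ x * H x s ∂μ‖ₑ ∂ν ≤ A * eLpNorm φ (ENNReal.ofReal (r / (r - 1))) μ) :
    eLpNorm (fun x => ∫ s, H x s ∂ν) (ENNReal.ofReal r) μ ≤ A := by
  set u : α → ℂ := fun x => ∫ s, H x s ∂ν
  have hu : Measurable u := hH.stronglyMeasurable.integral_prod_right.measurable
  set E : ℕ → Set α := fun n => spanningSets μ n ∩ {x | ∫⁻ s, ‖H x s‖ₑ ∂ν ≤ n}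
  have hE (n : ℕ) : MeasurableSet (E n) := (measurableSet_spanningSets μ n).inter
    (measurableSet_le hH.enorm.lintegral_prod_right measurable_const)
  have hlim (x : α) : Tendsto (fun n => (E n).indicator u x) atTop (𝓝 (u x)) := by
    by_cases hx : Integrable (H x) ν
    · obtain ⟨N, hN⟩ := ENNReal.exists_nat_gt hx.2.ne
      refine tendsto_const_nhds.congr' ?_
      filter_upwards [eventually_ge_atTop N, eventually_ge_atTop (spanningSetsIndex μ x)]
        with n h₁ h₂
      have hxE : x ∈ E n :=
        ⟨mem_spanningSets_of_index_le μ x h₂, hN.le.trans (by exact_mod_cast h₁)⟩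
      exact (indicator_of_mem hxE u).symm
    · have hux : u x = 0 := integral_undef hx
      exact tendsto_const_nhds.congr fun n => by by_cases h : x ∈ E n <;> simp [h, hux]
  refine (Lp.eLpNorm_lim_le_liminf_eLpNorm
    (fun n => (hu.indicator (hE n)).aestronglyMeasurable) u (.of_forall hlim)).trans
    (liminf_le_of_frequently_le' (.of_forall fun n => ?_))
  exact eLpNorm_indicator_integral_le hr hH (hE n)
    ((measure_mono inter_subset_left).trans_lt (measure_spanningSets_lt_top μ n)) (M := n)
    (fun x hx => by simpa using hx.2) hA

end Duality

section MeasurableModification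

variable {S X : Type*} [MeasurableSpace S] [TopologicalSpace X] {G : S → X → ℂ} {T : Set S}

lemma measurable_indicator_of_mem_closure [FrechetUrysohnSpace X] {D : Set X}
    (hG : ∀ s ∈ T, Continuous (G s)) (hD : ∀ x ∈ D, Measurable (T.indicator fun s => G s x))
    {x : X} (hx : x ∈ closure D) : Measurable (T.indicator fun s => G s x) := by
  obtain ⟨d, hd, hlim⟩ := mem_closure_iff_seq_limit.1 hx
  refine measurable_of_tendsto_metrizable (fun n => hD (d n) (hd n)) (tendsto_pi_nhds.2 fun s => ?_)
  by_cases hs : s ∈ T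
  · simpa [hs, Function.comp_def] using ((hG s hs).tendsto x).comp hlim
  · simp [hs]

variable [TopologicalSpace.MetrizableSpace X] [SecondCountableTopology X] [MeasurableSpace X]
  [BorelSpace X]

lemma measurable_prod_indicator_of_continuous {K : Set X} (hK : MeasurableSet K)
    (hG : ∀ s ∈ T, Continuous (G s)) (hGK : ∀ x ∈ K, Measurable (T.indicator fun s => G s x)) :
    Measurable ((K ×ˢ T).indicator fun p : X × S => G p.2 p.1) := by
  have hU : Measurable (Function.uncurry fun (x : K) => T.indicator fun s => G s x) := by
    refine measurable_uncurry_of_continuous_of_measurable (fun s => ?_) fun x => hGK x x.2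
    by_cases hs : s ∈ T
    · simpa [hs, Function.comp_def] using (hG s hs).comp continuous_subtype_val
    · simpa [hs] using continuous_const
  refine measurable_of_restrict_of_restrict_compl (measurable_fst hK) ?_ ?_
  · have hmap : Measurable fun p : (Prod.fst ⁻¹' K : Set (X × S)) => ((⟨p.1.1, p.2⟩ : K), p.1.2) :=
      (Measurable.subtype_mk (by fun_prop)).prodMk (by fun_prop)
    convert hU.comp hmap using 1
    ext p
    have hp : p.1.1 ∈ K := p.2
    by_cases hs : p.1.2 ∈ T <;> simp [hp, hs]
  · convert measurable_const (a := (0 : ℂ)) using 1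
    ext p
    have hp : p.1.1 ∉ K := p.2
    simp [hp]

/-- Joint measurability is only available over the closure of a countable dense set of points `x`
at which `G · x` is integrable; elsewhere the integral is `0` by convention. -/
lemma exists_measurable_modification {ν : Measure S} (hG : ∀ᵐ s ∂ν, Continuous (G s)) :
    ∃ (K : Set X) (H : X → S → ℂ), Measurable (Function.uncurry H) ∧
      (∀ᵐ s ∂ν, ∀ x ∈ K, H x s = G s x) ∧ ∀ x ∉ K, H x = 0 ∧ ∫ s, G s x ∂ν = 0 := by
  obtain ⟨D, hD_int, hD_count, hD_dense⟩ := (TopologicalSpace.IsSeparable.of_separableSpace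
    {x | Integrable (fun s => G s x) ν}).exists_countable_dense_subset
  choose! m hm hGm using fun x (hx : x ∈ D) => (hD_int hx).1.aemeasurable
  obtain ⟨T, hT_ae, hT, hT_sub⟩ := IsMeasurablyGenerated.exists_measurable_subset
    (hG.and ((ae_ball_iff hD_count).2 hGm))
  have hGT : ∀ s ∈ T, Continuous (G s) := fun s hs => (hT_sub hs).1
  have hD_meas : ∀ x ∈ D, Measurable (T.indicator fun s => G s x) := fun x hx => by
    rw [indicator_congr fun s hs => (hT_sub hs).2 x hx]
    exact (hm x hx).indicator hT
  refine ⟨closure D, fun x s => ((closure D) ×ˢ T).indicator (fun p => G p.2 p.1) (x, s),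
    measurable_prod_indicator_of_continuous isClosed_closure.measurableSet hGT
      fun x hx => measurable_indicator_of_mem_closure hGT hD_meas hx, ?_, fun x hx => ⟨?_, ?_⟩⟩
  · filter_upwards [hT_ae] with s hs x hx
    exact indicator_of_mem (mk_mem_prod hx hs) _
  · ext s
    simp [hx]
  · exact integral_undef fun h => hx (hD_dense h)

lemma eLpNorm_integral_le_of_ae_continuous {ν : Measure S} [SFinite ν] {μ : Measure X}
    [SigmaFinite μ] {r : ℝ} (hr : 1 < r) (hG : ∀ᵐ s ∂ν, Continuous (G s)) {A : ℝ≥0∞}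
    (hA : ∀ φ : X → ℂ, Measurable φ → (∀ p, MemLp φ p μ) →
      AEMeasurable (fun s => ‖∫ x, φ x * G s x ∂μ‖ₑ) ν →
      ∫⁻ s, ‖∫ x, φ x * G s x ∂μ‖ₑ ∂ν ≤ A * eLpNorm φ (ENNReal.ofReal (r / (r - 1))) μ) :
    eLpNorm (fun x => ∫ s, G s x ∂ν) (ENNReal.ofReal r) μ ≤ A := by
  obtain ⟨K, H, hH, hHG, hK⟩ := exists_measurable_modification hG
  have hint (x : X) : ∫ s, G s x ∂ν = ∫ s, H x s ∂ν := by
    by_cases hx : x ∈ K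
    · exact integral_congr_ae (hHG.mono fun s hs => (hs x hx).symm)
    · simp [(hK x hx).1, (hK x hx).2]
  simp only [hint]
  refine eLpNorm_integral_le_of_forall_lintegral_enorm_integral_mul_le hr hH
    fun φ hφ hφ_mem hφ₀ => ?_
  have hpair : (fun s => ‖∫ x, φ x * H x s ∂μ‖ₑ) =ᵐ[ν] fun s => ‖∫ x, φ x * G s x ∂μ‖ₑ := by
    filter_upwards [hHG] with s hs
    congr 2 with x
    by_cases hx : x ∈ K
    · rw [hs x hx]
    · rw [hφ₀ x (by simp [(hK x hx).1]), zero_mul, zero_mul]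
  rw [lintegral_congr_ae hpair]
  refine hA φ hφ hφ_mem (AEMeasurable.congr ?_ hpair)
  exact (((hφ.comp measurable_fst).mul hH).stronglyMeasurable.integral_prod_left').measurable.enorm
    |>.aemeasurable

end MeasurableModification

section WeightedEstimates

lemma lintegral_le_Lp_mul_Lq_of_le_mul {S : Type*} [MeasurableSpace S] {ν : Measure S}
    {b g k : S → ℝ≥0∞} {p q : ℝ} (hpq : p.HolderConjugate q) (hb : AEMeasurable b ν)
    (hk : AEMeasurable k ν) (hk_top : ∫⁻ s, k s ^ q ∂ν ≠ ∞) (hbgk : ∀ᵐ s ∂ν, b s ≤ g s * k s) :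
    ∫⁻ s, b s ∂ν ≤ (∫⁻ s, g s ^ p ∂ν) ^ (1 / p) * (∫⁻ s, k s ^ q ∂ν) ^ (1 / q) := by
  have hk_fin : ∀ᵐ s ∂ν, k s ≠ ∞ := by
    filter_upwards [ae_lt_top' (hk.pow_const q) hk_top] with s hs
    exact ((ENNReal.rpow_lt_top_iff_of_pos hpq.symm.pos).1 hs).ne
  -- Hölder's inequality is applied to `b / k ≤ g`, which is measurable where `g` may not be.
  calc ∫⁻ s, b s ∂ν ≤ ∫⁻ s, ((fun s => b s / k s) * k) s ∂ν := by
        refine lintegral_mono_ae ?_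
        filter_upwards [hk_fin, hbgk] with s hs hle
        rcases eq_or_ne (k s) 0 with h₀ | h₀
        · rw [h₀, mul_zero] at hle
          exact hle.trans zero_le
        · exact (ENNReal.div_mul_cancel h₀ hs).ge
    _ ≤ (∫⁻ s, (b s / k s) ^ p ∂ν) ^ (1 / p) * (∫⁻ s, k s ^ q ∂ν) ^ (1 / q) :=
        ENNReal.lintegral_mul_le_Lp_mul_Lq ν hpq (hb.div hk) hk
    _ ≤ _ := by
        refine mul_le_mul' (ENNReal.rpow_le_rpow (lintegral_mono_ae ?_) hpq.one_div_nonneg) le_rfl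
        filter_upwards [hbgk] with s hs
        exact ENNReal.rpow_le_rpow (ENNReal.div_le_of_le_mul hs) hpq.nonneg

lemma holderConjugate_mul_div_sub_two {D r : ℝ} (hD : 0 < D - 2) (hr : 1 < r) :
    (D * r / (D * r - D + 2)).HolderConjugate (r * (D / (D - 2))) := by
  have hD₀ : D ≠ 0 := by linarith
  have hden : 0 < D * r - D + 2 := by nlinarith
  refine Real.holderConjugate_iff.2 ⟨?_, ?_⟩
  · rw [one_lt_div hden]
    linarith
  · field_simp
    ring

variable {V : Type*} [NormedAddCommGroup V] [InnerProductSpace ℝ V] [FiniteDimensional ℝ V]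
  [MeasurableSpace V] [BorelSpace V] {φ : V → ℂ} {τ q r : ℝ}

lemma aemeasurable_eLpNorm_schrod (hφ : Integrable φ) (hq : 0 < q) :
    AEMeasurable fun τ => eLpNorm (schrod (finrank ℝ V) τ φ) (ENNReal.ofReal q) volume := by
  have hmeas : Measurable fun σ => eLpNorm (chirpFourier φ σ) (ENNReal.ofReal q) volume :=
    measurable_eLpNorm_of_measurable_uncurry (continuous_uncurry_chirpFourier hφ).measurable
      (ENNReal.ofReal_pos.2 hq).ne' ENNReal.ofReal_ne_top
  have hweight : Measurable fun τ : ℝ =>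
      ENNReal.ofReal ((4 * π * |τ|) ^ (-(finrank ℝ V * (1 / 2 - 1 / q)) : ℝ)) := by fun_prop
  refine ⟨_, hweight.mul (hmeas.comp (by fun_prop : Measurable fun τ : ℝ => (4 * τ)⁻¹)), ?_⟩
  filter_upwards [Measure.ae_ne volume 0] with τ hτ
  exact eLpNorm_schrod hτ hq.le φ

lemma ofReal_rpow_mul_eLpNorm_schrod (hτ : τ ≠ 0) (hq : 0 ≤ q) (a : ℝ) (φ : V → ℂ) :
    ENNReal.ofReal (|τ| ^ a) *
        eLpNorm (schrod (finrank ℝ V) τ φ) (ENNReal.ofReal q) volume =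
      ENNReal.ofReal ((4 * π) ^ (-(finrank ℝ V * (1 / 2 - 1 / q)) : ℝ)) *
        (ENNReal.ofReal (|τ| ^ (a - finrank ℝ V * (1 / 2 - 1 / q))) *
          eLpNorm (chirpFourier φ (4 * τ)⁻¹) (ENNReal.ofReal q) volume) := by
  have hτ' : 0 < |τ| := abs_pos.2 hτ
  rw [eLpNorm_schrod hτ hq, ← mul_assoc, ← mul_assoc, ← ENNReal.ofReal_mul (by positivity),
    ← ENNReal.ofReal_mul (by positivity), Real.mul_rpow (by positivity) hτ'.le, sub_eq_add_neg a,
    Real.rpow_add hτ', mul_left_comm]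

lemma exists_ofReal_rpow_mul_eLpNorm_schrod_le (V : Type*) [NormedAddCommGroup V]
    [InnerProductSpace ℝ V] [FiniteDimensional ℝ V] [MeasurableSpace V] [BorelSpace V]
    (hr : 2 < r) :
    ∃ C : ℝ≥0, ∀ φ : V → ℂ, Measurable φ → (∀ p, MemLp φ p) → ∀ τ ≠ 0,
      ENNReal.ofReal (|τ| ^ (finrank ℝ V * (1 / 2 - 1 / r))) *
          eLpNorm (schrod (finrank ℝ V) τ φ) (ENNReal.ofReal r) volume ≤
        C * eLpNorm φ (ENNReal.ofReal (r / (r - 1))) volume := by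
  obtain ⟨C, hC⟩ := exists_eLpNorm_chirpFourier_rpow_le (V := V) hr
  refine ⟨((4 * π) ^ (-(finrank ℝ V * (1 / 2 - 1 / r)) : ℝ)).toNNReal * C ^ (1 / r),
    fun φ hφ hφp τ hτ => ?_⟩
  have hr₀ : 0 < r := by linarith
  have h := ENNReal.rpow_le_rpow (hC φ hφ hφp (4 * τ)⁻¹) (one_div_pos.2 hr₀).le
  rw [ENNReal.mul_rpow_of_nonneg _ _ (one_div_pos.2 hr₀).le, one_div,
    ENNReal.rpow_rpow_inv hr₀.ne', ENNReal.rpow_rpow_inv hr₀.ne'] at h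
  rw [ofReal_rpow_mul_eLpNorm_schrod hτ hr₀.le, sub_self, Real.rpow_zero, ENNReal.ofReal_one,
    one_mul, ENNReal.coe_mul, ENNReal.coe_rpow_of_nonneg _ (one_div_pos.2 hr₀).le, mul_assoc,
    one_div r]
  exact mul_le_mul' le_rfl h

lemma exists_lintegral_ofReal_rpow_mul_eLpNorm_schrod_rpow_le (V : Type*) [NormedAddCommGroup V]
    [InnerProductSpace ℝ V] [FiniteDimensional ℝ V] [MeasurableSpace V] [BorelSpace V]
    (hV : 3 ≤ finrank ℝ V) (hr : 2 < r) :
    ∃ C : ℝ≥0, ∀ φ : V → ℂ, Measurable φ → (∀ p, MemLp φ p) →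
      ∫⁻ τ, (ENNReal.ofReal (|τ| ^ (finrank ℝ V * (1 / 2 - 1 / r))) *
        eLpNorm (schrod (finrank ℝ V) τ φ)
          (ENNReal.ofReal (r * (finrank ℝ V / (finrank ℝ V - 2)))) volume) ^ r ≤
      C * eLpNorm φ (ENNReal.ofReal (r / (r - 1))) volume ^ r := by
  obtain ⟨C, hC⟩ := exists_lintegral_eLpNorm_chirpFourier_rpow_le V hV hr
  have hD : (3 : ℝ) ≤ finrank ℝ V := by exact_mod_cast hV
  set D : ℝ := (finrank ℝ V : ℝ)
  have hr₀ : 0 < r := by linarith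
  have hD₀ : 0 < D - 2 := by linarith
  set q := r * (D / (D - 2))
  have hq : 0 ≤ q := by positivity
  -- The choice of `q` makes the `r`-th power of the weight the Jacobian of `τ ↦ (4τ)⁻¹`.
  have hexp : (D * (1 / 2 - 1 / r) - D * (1 / 2 - 1 / q)) * r = -2 := by
    simp only [q]
    field_simp
    ring
  have hweight (τ : ℝ) : ENNReal.ofReal
      (|τ| ^ (D * (1 / 2 - 1 / r) - D * (1 / 2 - 1 / q))) ^ r = ENNReal.ofReal (τ ^ 2)⁻¹ := by
    rw [ENNReal.ofReal_rpow_of_nonneg (by positivity) hr₀.le, ← Real.rpow_mul (abs_nonneg τ),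
      hexp, Real.rpow_neg (abs_nonneg τ), Real.rpow_two, sq_abs]
  refine ⟨((4 * π) ^ (-(D * (1 / 2 - 1 / q)))).toNNReal ^ r * (4 * C), fun φ hφ hφp => ?_⟩
  set N : ℝ → ℝ≥0∞ := fun σ => eLpNorm (chirpFourier φ σ) (ENNReal.ofReal q) volume ^ r
  calc ∫⁻ τ, (ENNReal.ofReal (|τ| ^ (D * (1 / 2 - 1 / r))) *
        eLpNorm (schrod (finrank ℝ V) τ φ) (ENNReal.ofReal q) volume) ^ r
      = ∫⁻ τ, ENNReal.ofReal ((4 * π) ^ (-(D * (1 / 2 - 1 / q)))) ^ r *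
          (ENNReal.ofReal (τ ^ 2)⁻¹ * N (4 * τ)⁻¹) := by
        refine lintegral_congr_ae ?_
        filter_upwards [Measure.ae_ne volume 0] with τ hτ
        rw [ofReal_rpow_mul_eLpNorm_schrod hτ hq, ENNReal.mul_rpow_of_nonneg _ _ hr₀.le,
          ENNReal.mul_rpow_of_nonneg _ _ hr₀.le, hweight]
    _ = ENNReal.ofReal ((4 * π) ^ (-(D * (1 / 2 - 1 / q)))) ^ r * (4 * ∫⁻ σ, N σ) := by
        rw [lintegral_const_mul' _ _ (ENNReal.rpow_ne_top_of_nonneg hr₀.le ENNReal.ofReal_ne_top),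
          lintegral_inv_sq_mul_comp_inv four_ne_zero, abs_of_pos four_pos, ENNReal.ofReal_ofNat]
    _ ≤ ENNReal.ofReal ((4 * π) ^ (-(D * (1 / 2 - 1 / q)))) ^ r *
          (4 * (C * eLpNorm φ (ENNReal.ofReal (r / (r - 1))) volume ^ r)) := by
        gcongr
        exact hC φ hφ hφp
    _ = _ := by
        rw [ENNReal.coe_mul, ENNReal.coe_rpow_of_nonneg _ hr₀.le, ENNReal.coe_mul]
        simp only [ENNReal.ofReal, ENNReal.coe_ofNat, mul_assoc]

lemma enorm_integral_mul_schrod_le (d : ℕ) (hφ : Integrable φ) (hτ : τ ≠ 0) (p q : ℝ≥0∞)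
    [ENNReal.HolderConjugate p q] (f : V → ℂ) :
    ‖∫ x, φ x * schrod d τ f x‖ₑ ≤ eLpNorm f p volume * eLpNorm (schrod d τ φ) q volume := by
  by_cases hf : Integrable f
  · rw [integral_mul_schrod_comm d hφ hf, mul_comm]
    calc ‖∫ x, schrod d τ φ x * f x‖ₑ ≤ eLpNorm (schrod d τ φ • f) 1 volume := by
          rw [eLpNorm_one_eq_lintegral_enorm]
          exact enorm_integral_le_lintegral_enorm _
      _ ≤ _ := eLpNorm_smul_le_mul_eLpNorm hf.1 (continuous_schrod d hτ φ).aestronglyMeasurable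
  · simp [schrod_of_not_integrable d hτ hf]

lemma enorm_integral_mul_schrod_le_weighted (d : ℕ) (hφ : Integrable φ) (hτ : τ ≠ 0) (a : ℝ)
    (p q : ℝ≥0∞) [ENNReal.HolderConjugate p q] (f : V → ℂ) :
    ‖∫ x, φ x * schrod d τ f x‖ₑ ≤
      eLpNorm (fun x => ((|τ| ^ (-a) : ℝ) : ℂ) * f x) p volume *
        (ENNReal.ofReal (|τ| ^ a) * eLpNorm (schrod d τ φ) q volume) := by
  have hcancel : ENNReal.ofReal (|τ| ^ (-a)) * ENNReal.ofReal (|τ| ^ a) = 1 := by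
    rw [← ENNReal.ofReal_mul (by positivity), ← Real.rpow_add (abs_pos.2 hτ), neg_add_cancel,
      Real.rpow_zero, ENNReal.ofReal_one]
  have hweight : eLpNorm (fun x => ((|τ| ^ (-a) : ℝ) : ℂ) * f x) p volume =
      ENNReal.ofReal (|τ| ^ (-a)) * eLpNorm f p volume := by
    change eLpNorm (((|τ| ^ (-a) : ℝ) : ℂ) • f) p volume = _
    rw [eLpNorm_const_smul, ← ofReal_norm, Complex.norm_of_nonneg (by positivity)]
  rw [hweight, mul_mul_mul_comm, hcancel, one_mul]
  exact enorm_integral_mul_schrod_le d hφ hτ p q f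

lemma setLIntegral_enorm_integral_mul_schrod_le (d : ℕ) (hφ : Integrable φ) (hr : 1 < r) (a : ℝ)
    (p q : ℝ≥0∞) [ENNReal.HolderConjugate p q] (t : ℝ) (I : Set ℝ) (F : ℝ → V → ℂ)
    (hF : AEMeasurable (fun s => ‖∫ x, φ x * schrod d (t - s) (F s) x‖ₑ) (volume.restrict I))
    (hφ_meas : AEMeasurable fun τ => eLpNorm (schrod d τ φ) q volume)
    (hφ_fin : ∫⁻ τ, (ENNReal.ofReal (|τ| ^ a) * eLpNorm (schrod d τ φ) q volume) ^ r ≠ ∞) :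
    ∫⁻ s in I, ‖∫ x, φ x * schrod d (t - s) (F s) x‖ₑ ≤
      mixedNorm volume I (ENNReal.ofReal (r / (r - 1))) p
          (fun s x => ((|t - s| ^ (-a) : ℝ) : ℂ) * F s x) *
        (∫⁻ τ, (ENNReal.ofReal (|τ| ^ a) * eLpNorm (schrod d τ φ) q volume) ^ r) ^ (1 / r) := by
  have hconj : (r / (r - 1)).HolderConjugate r := (Real.HolderConjugate.conjExponent hr).symm
  set k : ℝ → ℝ≥0∞ := fun τ => ENNReal.ofReal (|τ| ^ a) * eLpNorm (schrod d τ φ) q volume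
  have hk : AEMeasurable k := .mul (by fun_prop) hφ_meas
  have hk_sub : AEMeasurable (fun s => k (t - s)) (volume.restrict I) :=
    (hk.comp_quasiMeasurePreserving (quasiMeasurePreserving_sub_left volume t)).restrict
  have hk_le : ∫⁻ s in I, k (t - s) ^ r ≤ ∫⁻ τ, k τ ^ r :=
    (setLIntegral_le_lintegral I _).trans_eq (lintegral_sub_left_eq_self (fun τ => k τ ^ r) t)
  rw [mixedNorm, if_neg ENNReal.ofReal_ne_top, ENNReal.toReal_ofReal hconj.nonneg]
  refine (lintegral_le_Lp_mul_Lq_of_le_mul (k := fun s => k (t - s)) hconj hF hk_sub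
    (ne_top_of_le_ne_top hφ_fin hk_le) ?_).trans
      (mul_le_mul' le_rfl (ENNReal.rpow_le_rpow hk_le hconj.symm.one_div_nonneg))
  filter_upwards [ae_restrict_of_ae (Measure.ae_ne volume t)] with s hs
  exact enorm_integral_mul_schrod_le_weighted _ hφ (sub_ne_zero.2 hs.symm) _ _ _ _

lemma exists_lintegral_enorm_integral_mul_schrod_le_mixedNorm_one (V : Type*)
    [NormedAddCommGroup V] [InnerProductSpace ℝ V] [FiniteDimensional ℝ V] [MeasurableSpace V]
    [BorelSpace V] (hr : 2 < r) :
    ∃ C : ℝ≥0, ∀ φ : V → ℂ, Measurable φ → (∀ p, MemLp φ p) →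
      ∀ (t : ℝ) (I : Set ℝ) (F : ℝ → V → ℂ),
        ∫⁻ s in I, ‖∫ x, φ x * schrod (finrank ℝ V) (t - s) (F s) x‖ₑ ≤
          C * mixedNorm volume I 1 (ENNReal.ofReal (r / (r - 1))) (fun s x =>
            ((|t - s| ^ (-(finrank ℝ V * (1 / 2 - 1 / r)) : ℝ) : ℝ) : ℂ) * F s x) *
          eLpNorm φ (ENNReal.ofReal (r / (r - 1))) volume := by
  obtain ⟨C, hC⟩ := exists_ofReal_rpow_mul_eLpNorm_schrod_le V hr
  refine ⟨C, fun φ hφ hφp t I F => ?_⟩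
  have : ENNReal.HolderConjugate (ENNReal.ofReal (r / (r - 1))) (ENNReal.ofReal r) :=
    (Real.HolderConjugate.conjExponent (by linarith)).symm.ennrealOfReal
  set M : ℝ≥0∞ := C * eLpNorm φ (ENNReal.ofReal (r / (r - 1))) volume
  have hM : M ≠ ∞ := ENNReal.mul_ne_top ENNReal.coe_ne_top (hφp _).2.ne
  rw [mixedNorm, if_neg ENNReal.one_ne_top, ENNReal.toReal_one, one_div_one, ENNReal.rpow_one,
    mul_right_comm, ← lintegral_const_mul' _ _ hM]
  refine lintegral_mono_ae ?_
  filter_upwards [ae_restrict_of_ae (Measure.ae_ne volume t)] with s hs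
  have hts : t - s ≠ 0 := sub_ne_zero.2 hs.symm
  rw [ENNReal.rpow_one, mul_comm]
  exact (enorm_integral_mul_schrod_le_weighted _ (memLp_one_iff_integrable.1 (hφp 1)) hts _ _ _
    _).trans (mul_le_mul' le_rfl (hC φ hφ hφp _ hts))

lemma exists_lintegral_enorm_integral_mul_schrod_le_mixedNorm (V : Type*)
    [NormedAddCommGroup V] [InnerProductSpace ℝ V] [FiniteDimensional ℝ V] [MeasurableSpace V]
    [BorelSpace V] (hV : 3 ≤ finrank ℝ V) (hr : 2 < r) :
    ∃ C : ℝ≥0, ∀ φ : V → ℂ, Measurable φ → (∀ p, MemLp φ p) →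
      ∀ (t : ℝ) (I : Set ℝ) (F : ℝ → V → ℂ),
        AEMeasurable (fun s => ‖∫ x, φ x * schrod (finrank ℝ V) (t - s) (F s) x‖ₑ)
          (volume.restrict I) →
        ∫⁻ s in I, ‖∫ x, φ x * schrod (finrank ℝ V) (t - s) (F s) x‖ₑ ≤
          C * mixedNorm volume I (ENNReal.ofReal (r / (r - 1)))
            (ENNReal.ofReal (finrank ℝ V * r / (finrank ℝ V * r - finrank ℝ V + 2))) (fun s x =>
              ((|t - s| ^ (-(finrank ℝ V * (1 / 2 - 1 / r)) : ℝ) : ℝ) : ℂ) * F s x) *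
          eLpNorm φ (ENNReal.ofReal (r / (r - 1))) volume := by
  obtain ⟨C, hC⟩ := exists_lintegral_ofReal_rpow_mul_eLpNorm_schrod_rpow_le V hV hr
  refine ⟨C ^ (1 / r), fun φ hφ hφp t I F hmeas => ?_⟩
  have hD : (3 : ℝ) ≤ finrank ℝ V := by exact_mod_cast hV
  have hr₀ : 0 < r := by linarith
  have hφ₁ := memLp_one_iff_integrable.1 (hφp 1)
  set D : ℝ := (finrank ℝ V : ℝ)
  set q := r * (D / (D - 2))
  have hD₀ : 0 < D - 2 := by linarith
  have hq : 0 < q := by positivity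
  have : ENNReal.HolderConjugate (ENNReal.ofReal (D * r / (D * r - D + 2))) (ENNReal.ofReal q) :=
    (holderConjugate_mul_div_sub_two hD₀ (by linarith)).ennrealOfReal
  have hfin := ne_top_of_le_ne_top (ENNReal.mul_ne_top ENNReal.coe_ne_top
    (ENNReal.rpow_ne_top_of_nonneg hr₀.le (hφp _).2.ne)) (hC φ hφ hφp)
  have hroot : (C * eLpNorm φ (ENNReal.ofReal (r / (r - 1))) volume ^ r) ^ (1 / r) =
      ↑(C ^ (1 / r)) * eLpNorm φ (ENNReal.ofReal (r / (r - 1))) volume := by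
    rw [ENNReal.mul_rpow_of_nonneg _ _ (one_div_pos.2 hr₀).le, ← ENNReal.rpow_mul,
      mul_one_div_cancel hr₀.ne', ENNReal.rpow_one,
      ENNReal.coe_rpow_of_nonneg _ (one_div_pos.2 hr₀).le]
  refine (setLIntegral_enorm_integral_mul_schrod_le _ hφ₁ (by linarith) (D * (1 / 2 - 1 / r))
    (ENNReal.ofReal (D * r / (D * r - D + 2))) (ENNReal.ofReal q) t I F hmeas
    (aemeasurable_eLpNorm_schrod hφ₁ hq) hfin).trans ((mul_le_mul' le_rfl
      (ENNReal.rpow_le_rpow (hC φ hφ hφp) (one_div_pos.2 hr₀).le)).trans_eq ?_)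
  rw [hroot, mul_left_comm, ← mul_assoc]

end WeightedEstimates

theorem weighted_linear_estimate_3d_general {V : Type*} [NormedAddCommGroup V]
    [InnerProductSpace ℝ V] [FiniteDimensional ℝ V] [MeasurableSpace V] [BorelSpace V]
    (hV : 3 ≤ finrank ℝ V) (r : ℝ) (hr : 2 < r) :
    ∃ C : ℝ, 0 < C ∧ ∀ (t : ℝ) (I : Set ℝ) (F : ℝ → V → ℂ),
      eLpNorm (fun x => ∫ s in I, schrod (finrank ℝ V) (t - s) (F s) x)
          (ENNReal.ofReal r) volume ≤
        ENNReal.ofReal C *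
          min
            (mixedNorm volume I 1 (ENNReal.ofReal (r / (r - 1))) (fun s x =>
              ((|t - s| ^ (-(finrank ℝ V * (1 / 2 - 1 / r)) : ℝ) : ℝ) : ℂ) * F s x))
            (mixedNorm volume I (ENNReal.ofReal (r / (r - 1)))
              (ENNReal.ofReal (finrank ℝ V * r / (finrank ℝ V * r - finrank ℝ V + 2)))
              (fun s x =>
                ((|t - s| ^ (-(finrank ℝ V * (1 / 2 - 1 / r)) : ℝ) : ℝ) : ℂ) * F s x)) := by
  obtain ⟨C₁, hC₁⟩ := exists_lintegral_enorm_integral_mul_schrod_le_mixedNorm_one V hr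
  obtain ⟨C₂, hC₂⟩ := exists_lintegral_enorm_integral_mul_schrod_le_mixedNorm V hV hr
  refine ⟨C₁ + C₂ + 1, by positivity, fun t I F => ?_⟩
  have hcont : ∀ᵐ s ∂volume.restrict I, Continuous (schrod (finrank ℝ V) (t - s) (F s)) := by
    filter_upwards [ae_restrict_of_ae (Measure.ae_ne volume t)] with s hs
    exact continuous_schrod _ (sub_ne_zero.2 hs.symm) _
  have hC {C : ℝ≥0} (hC : C ≤ C₁ + C₂ + 1) : (C : ℝ≥0∞) ≤ ENNReal.ofReal (C₁ + C₂ + 1) := by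
    rw [← ENNReal.ofReal_coe_nnreal]
    exact ENNReal.ofReal_le_ofReal (by exact_mod_cast hC)
  rw [mul_min]
  refine le_min ?_ ?_
  · exact (eLpNorm_integral_le_of_ae_continuous (by linarith) hcont fun φ hφ hφp _ =>
      hC₁ φ hφ hφp t I F).trans (mul_le_mul' (hC (by rw [add_assoc]; exact le_self_add)) le_rfl)
  · exact (eLpNorm_integral_le_of_ae_continuous (by linarith) hcont fun φ hφ hφp hmeas =>
      hC₂ φ hφ hφp t I F hmeas).trans
        (mul_le_mul' (hC (by rw [add_right_comm]; exact le_add_self)) le_rfl)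

/-- **Weighted linear estimates in three dimensions.**  Fix `2 < r < 6`.  For any `t ∈ ℝ`,
any interval `I ⊆ [0, t]`, and any spacetime `F : I × ℝ³ → ℂ`,
`‖∫_I e^{i(t-s)Δ} F(s) ds‖_{L^r_x(ℝ³)}` is bounded by `C` times the minimum of
`‖|t-s|^{-3(1/2-1/r)} F(s)‖_{L^1_s L^{r/(r-1)}_x(I×ℝ³)}` and
`‖|t-s|^{-3(1/2-1/r)} F(s)‖_{L^{r/(r-1)}_s L^{3r/(3r-1)}_x(I×ℝ³)}`, with `C = C(r)`. -/
theorem weighted_linear_estimate_3d (r : ℝ) (hr : 2 < r) (hr6 : r < 6) :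
    ∃ C : ℝ, 0 < C ∧
      ∀ (t : ℝ) (I : Set ℝ), MeasurableSet I → I.OrdConnected → I ⊆ Set.Icc 0 t →
        ∀ F : ℝ → EuclideanSpace ℝ (Fin 3) → ℂ,
          eLpNorm (fun x => ∫ s in I, schrod 3 (t - s) (F s) x) (ENNReal.ofReal r) volume ≤
            ENNReal.ofReal C *
              min
                (mixedNorm volume I 1 (ENNReal.ofReal (r / (r - 1)))
                  (fun s x => ((|t - s| ^ (-(3 * (1 / 2 - 1 / r))) : ℝ) : ℂ) * F s x))
                (mixedNorm volume I (ENNReal.ofReal (r / (r - 1)))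
                  (ENNReal.ofReal (3 * r / (3 * r - 1)))
                  (fun s x => ((|t - s| ^ (-(3 * (1 / 2 - 1 / r))) : ℝ) : ℂ) * F s x)) := by
  have hdim : finrank ℝ (EuclideanSpace ℝ (Fin 3)) = 3 := finrank_euclideanSpace_fin
  obtain ⟨C, hC, h⟩ := weighted_linear_estimate_3d_general hdim.ge r hr
  refine ⟨C, hC, fun t I _ _ _ F => ?_⟩
  have hexp : 3 * r - 3 + 2 = 3 * r - 1 := by ring
  simpa only [hdim, Nat.cast_ofNat, hexp] using h t I F
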